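/- Assume the SOSC holds with respect to J, and fix ε₀ > 0. Then the logarithmically averaged surface content Λ_S := lim_{δ→0⁺} (1/ln(1/δ)) ∫_δ^{ε₀} ε^{D−d+1} H^{d−1}(∂F(ε)) ε^{−1} dε exists and is finite, and the rescaled surface measures localize: for every bounded continuous f : ℝ^d → ℝ, lim_{δ→0⁺} (1/ln(1/δ)) ∫_δ^{ε₀} ε^{D−d+1} (∫_{∂F(ε)} f dH^{d−1}) ε^{−1} dε = Λ_S · ∫_F f dμ_F, where ∂F(ε) is the topological boundary of F(ε). In other words, the measures (1/ln(1/δ)) ∫_δ^{ε₀} ε^{D−d+1} H^{d−1}(∂F(ε) ∩ ·) ε^{−1} dε converge weakly, as δ → 0, to Λ_S · μ_F, a constant multiple of the normalized D-dimensional Hausdorff measure on F. -/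

import Mathlib

open MeasureTheory Metric Filter Set
open scoped ENNReal Topology

/-!
At logarithmic time `t = log (1 / ε)` the rescaled surface measures
`ν t = ε ^ (D - d + 1) • H^{d-1}|{dist(·, F) = ε}` satisfy the renewal inequality
`ν t ≤ ∑ i, r i ^ D • (S i)_* ν (t + log (r i))`, because a point at distance `ε` from
`F = ⋃ i, S i '' F` is at distance exactly `ε` from some `S i '' F`. Let `U T` be the total mass of
`ν` accumulated up to time `T`. The inequality makes `∑ i, r i ^ D * (U T - U (T + log (r i)))`
decreasing in `T`, hence convergent, and its Cesàro means are asymptotic to a multiple of `U T / T`;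
so `U T / T` converges.

Integrating the same inequality over `t ∈ (a, T]` shows that the accumulated measure is, up to an
error of mass `O(1)`, dominated by its image under the Hutchinson operator
`m ↦ ∑ i, r i ^ D • (S i)_* m`. As that operator contracts and fixes `μ_F`, the accumulated measure
divided by its mass converges to `μ_F`.

The normalization needs `0 < H^D(F)`, which the open set condition gives through a mass distribution
argument; and for all but countably many `ε` the boundary of the parallel set is the level set
`{dist(·, F) = ε}`.
-/

open scoped NNReal

section Averages

theorem tendsto_inv_smul_integral_atTop {V : Type*} [NormedAddCommGroup V] [NormedSpace ℝ V]
    [CompleteSpace V] {q : ℝ → V} {c : V} {a : ℝ}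
    (hint : ∀ b, IntervalIntegrable q volume a b) (hq : Tendsto q atTop (𝓝 c)) :
    Tendsto (fun T : ℝ ↦ T⁻¹ • ∫ t in a..T, q t) atTop (𝓝 c) := by
  have hint' (b : ℝ) : IntervalIntegrable (fun t ↦ q t - c) volume a b :=
    (hint b).sub intervalIntegrable_const
  have hzero : (fun T ↦ ∫ t in a..T, (q t - c)) =o[atTop] (fun T : ℝ ↦ T) := by
    refine Asymptotics.isLittleO_iff.2 fun η hη ↦ ?_
    have hη4 : 0 < η / 4 := by positivity
    obtain ⟨b, hb⟩ := eventually_atTop.1 (hq.eventually (closedBall_mem_nhds c hη4))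
    have hconst : (fun _ : ℝ ↦ ∫ t in a..b, (q t - c)) =o[atTop] (fun T : ℝ ↦ T) :=
      Asymptotics.isLittleO_const_id_atTop _
    filter_upwards [Asymptotics.isLittleO_iff.1 hconst hη4,
      eventually_ge_atTop b, eventually_ge_atTop (-b)] with T hhead hbT hbT'
    have htail : ‖∫ t in b..T, (q t - c)‖ ≤ η / 4 * |T - b| :=
      intervalIntegral.norm_integral_le_of_norm_le_const fun t ht ↦ by
        rw [← dist_eq_norm]
        exact hb t (uIoc_of_le hbT ▸ ht).1.le
    rw [← intervalIntegral.integral_add_adjacent_intervals (hint' b)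
      ((hint' b).symm.trans (hint' T))]
    have hTb : |T - b| ≤ 2 * ‖T‖ := by
      rw [Real.norm_eq_abs, abs_of_nonneg (by linarith), abs_of_nonneg (by linarith)]
      linarith
    calc _ ≤ η / 4 * ‖T‖ + η / 4 * |T - b| := norm_add_le_of_le hhead htail
      _ ≤ η * ‖T‖ := by nlinarith [norm_nonneg T]
  have hshift : Tendsto (fun T : ℝ ↦ c - (T⁻¹ * a) • c) atTop (𝓝 (c - (0 * a) • c)) :=
    ((tendsto_inv_atTop_zero.mul_const a).smul_const c).const_sub c
  have hmain := hzero.tendsto_inv_smul_nhds_zero.add hshift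
  rw [zero_mul, zero_smul, sub_zero, zero_add] at hmain
  refine hmain.congr' ?_
  filter_upwards [eventually_ne_atTop 0] with T hT
  rw [intervalIntegral.integral_sub (hint T) intervalIntegrable_const,
    intervalIntegral.integral_const, smul_sub, smul_smul, mul_sub, inv_mul_cancel₀ hT, sub_smul,
    one_smul, sub_add_cancel]

variable {ι : Type*} [Fintype ι] {w s : ι → ℝ} {U : ℝ → ℝ}

theorem antitone_sum_mul_sub (hw : ∑ i, w i = 1)
    (hU : ∀ a b, a ≤ b → U b - U a ≤ ∑ i, w i * (U (b - s i) - U (a - s i))) :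
    Antitone fun T ↦ ∑ i, w i * (U T - U (T - s i)) := by
  intro a b hab
  have htotal : U b - U a = ∑ i, w i * (U b - U a) := by rw [← Finset.sum_mul, hw, one_mul]
  have hincr := hU a b hab
  rw [htotal, ← sub_nonneg, ← Finset.sum_sub_distrib] at hincr
  rw [← sub_nonneg, ← Finset.sum_sub_distrib]
  exact hincr.trans_eq (Finset.sum_congr rfl fun i _ ↦ by ring)

theorem abs_integral_sub_comp_sub_le (hU : Monotone U) {s C : ℝ} (hs : 0 ≤ s)
    (hC : ∀ T, 0 ≤ T → U T - U (T - s) ≤ C) {T : ℝ} (hT : 0 ≤ T) :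
    |(∫ t in (0 : ℝ)..T, (U t - U (t - s))) - s * U T| ≤ s * C + |∫ t in -s..0, U t| := by
  have hint (a b : ℝ) : IntervalIntegrable U volume a b := hU.intervalIntegrable
  have hshift : IntervalIntegrable (fun t ↦ U (t - s)) volume 0 T :=
    (hU.comp fun _ _ h ↦ sub_le_sub_right h s).intervalIntegrable
  have htelescope : ∫ t in (0 : ℝ)..T, (U t - U (t - s)) =
      (∫ t in (T - s)..T, U t) - ∫ t in -s..0, U t := by
    rw [intervalIntegral.integral_sub (hint _ _) hshift,
      intervalIntegral.integral_comp_sub_right, zero_sub,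
      intervalIntegral.integral_interval_sub_interval_comm' (hint _ _) (hint _ _) (hint _ _)]
  have hlast : |(∫ t in (T - s)..T, U t) - s * U T| ≤ s * C := by
    have hconst : s * U T = ∫ _ in (T - s)..T, U T := by simp
    rw [hconst, ← intervalIntegral.integral_sub (hint _ _) intervalIntegrable_const,
      ← Real.norm_eq_abs, mul_comm]
    have := intervalIntegral.norm_integral_le_of_norm_le_const (a := T - s) (b := T) (C := C)
      (f := fun t ↦ U t - U T) fun t ht ↦ ?_
    · simpa [abs_of_nonneg hs] using this
    · rw [uIoc_of_le (by linarith)] at ht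
      rw [Real.norm_eq_abs, abs_sub_comm, abs_of_nonneg (sub_nonneg.2 (hU ht.2))]
      linarith [hC T hT, hU ht.1.le]
  rw [htelescope]
  calc |(∫ t in (T - s)..T, U t) - (∫ t in -s..0, U t) - s * U T|
      = |((∫ t in (T - s)..T, U t) - s * U T) - ∫ t in -s..0, U t| := by ring_nf
    _ ≤ _ := (abs_sub _ _).trans (add_le_add_left hlast _)

theorem abs_integral_sum_mul_sub_comp_sub_le (hU : Monotone U) (hw : ∀ i, 0 ≤ w i)
    (hs : ∀ i, 0 ≤ s i) {C : ι → ℝ} (hC : ∀ i T, 0 ≤ T → U T - U (T - s i) ≤ C i) {T : ℝ}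
    (hT : 0 ≤ T) :
    |(∫ t in (0 : ℝ)..T, ∑ i, w i * (U t - U (t - s i))) - (∑ i, w i * s i) * U T| ≤
      ∑ i, w i * (s i * C i + |∫ t in -s i..0, U t|) := by
  have hint (i : ι) : IntervalIntegrable (fun t ↦ w i * (U t - U (t - s i))) volume 0 T :=
    (hU.intervalIntegrable.sub
      (hU.comp fun _ _ h ↦ sub_le_sub_right h (s i)).intervalIntegrable).const_mul (w i)
  rw [intervalIntegral.integral_finsetSum fun i _ ↦ hint i, Finset.sum_mul,
    ← Finset.sum_sub_distrib]
  refine Finset.abs_sum_le_sum_abs _ _ |>.trans (Finset.sum_le_sum fun i _ ↦ ?_)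
  rw [intervalIntegral.integral_const_mul, mul_assoc, ← mul_sub, abs_mul, abs_of_nonneg (hw i)]
  exact mul_le_mul_of_nonneg_left (abs_integral_sub_comp_sub_le hU (hs i) (hC i) hT) (hw i)

/-- The hypothesis on `U` makes the weighted increments `∑ i, w i * (U T - U (T - s i))` decrease;
their Cesàro means differ from `(∑ i, w i * s i) * U T / T` by `O(1 / T)`. -/
theorem exists_tendsto_inv_mul_atTop_of_monotone (hw_pos : ∀ i, 0 < w i) (hw : ∑ i, w i = 1)
    (hs : ∀ i, 0 < s i) (hU : Monotone U)
    (hU_incr : ∀ a b, a ≤ b → U b - U a ≤ ∑ i, w i * (U (b - s i) - U (a - s i))) :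
    ∃ Λ, Tendsto (fun T ↦ T⁻¹ * U T) atTop (𝓝 Λ) := by
  set q : ℝ → ℝ := fun T ↦ ∑ i, w i * (U T - U (T - s i))
  have hq_anti : Antitone q := antitone_sum_mul_sub hw hU_incr
  have hterm (i : ι) (T : ℝ) : 0 ≤ w i * (U T - U (T - s i)) :=
    mul_nonneg (hw_pos i).le (sub_nonneg.2 (hU (by linarith [hs i])))
  have hmean : Tendsto (fun T ↦ T⁻¹ • ∫ t in (0 : ℝ)..T, q t) atTop (𝓝 (⨅ T, q T)) :=
    tendsto_inv_smul_integral_atTop (fun _ ↦ hq_anti.intervalIntegrable)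
      (tendsto_atTop_ciInf hq_anti
        ⟨0, forall_mem_range.2 fun T ↦ Finset.sum_nonneg fun i _ ↦ hterm i T⟩)
  have hincr (i : ι) (T : ℝ) (hT : 0 ≤ T) : U T - U (T - s i) ≤ q 0 / w i := by
    rw [le_div_iff₀' (hw_pos i)]
    exact (Finset.single_le_sum (fun j _ ↦ hterm j T) (Finset.mem_univ i)).trans (hq_anti hT)
  set σ := ∑ i, w i * s i
  have hbound (T : ℝ) (hT : 0 ≤ T) := abs_integral_sum_mul_sub_comp_sub_le hU
    (fun i ↦ (hw_pos i).le) (fun i ↦ (hs i).le) hincr hT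
  have herror : Tendsto (fun T ↦ T⁻¹ * ((∫ t in (0 : ℝ)..T, q t) - σ * U T)) atTop (𝓝 0) :=
    tendsto_inv_atTop_zero.zero_mul_isBoundedUnder_le
      (isBoundedUnder_of_eventually_le (eventually_atTop.2 ⟨0, hbound⟩))
  have hσ_pos : 0 < σ := by
    have hne : (Finset.univ : Finset ι).Nonempty :=
      Finset.nonempty_of_sum_ne_zero (f := w) (by simp [hw])
    exact Finset.sum_pos (fun i _ ↦ mul_pos (hw_pos i) (hs i)) hne
  refine ⟨σ⁻¹ * ((⨅ T, q T) - 0), ((hmean.sub herror).const_mul σ⁻¹).congr fun T ↦ ?_⟩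
  rw [smul_eq_mul]
  field_simp
  ring

theorem le_of_forall_le_sum_mul_comp_sub {w : ι → ℝ≥0∞} (hw : ∑ i, w i = 1) {b : ℝ}
    (hs_pos : ∀ i, 0 < s i) (hs_le : ∀ i, s i ≤ b)
    {g : ℝ → ℝ≥0∞} (hg : ∀ t, g t ≤ ∑ i, w i * g (t - s i)) {a : ℝ} {M : ℝ≥0∞}
    (hM : ∀ t ∈ Icc (a - b) a, g t ≤ M) {t : ℝ} (ht : a - b ≤ t) : g t ≤ M := by
  obtain ⟨j, -, hj⟩ := Finset.exists_min_image Finset.univ s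
    (Finset.nonempty_of_sum_ne_zero (f := w) (by simp [hw]))
  have hstep (n : ℕ) : ∀ t ∈ Icc (a - b) (a + n * s j), g t ≤ M := by
    induction n with
    | zero => simpa using hM
    | succ n ih =>
      intro t ht
      rcases le_total t a with hta | hat
      · exact hM t ⟨ht.1, hta⟩
      · have hterm (i : ι) : g (t - s i) ≤ M := by
          refine ih _ ⟨by linarith [hs_le i], ?_⟩
          have := ht.2
          push_cast at this
          linarith [hj i (Finset.mem_univ i)]
        calc g t ≤ ∑ i, w i * g (t - s i) := hg t
          _ ≤ ∑ i, w i * M := Finset.sum_le_sum fun i _ ↦ mul_le_mul_right (hterm i) _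
          _ = M := by rw [← Finset.sum_mul, hw, one_mul]
  obtain ⟨n, hn⟩ := exists_nat_ge ((t - a) / s j)
  exact hstep n t ⟨ht, by linarith [(div_le_iff₀ (hs_pos j)).1 hn]⟩

end Averages

section Similarities

variable {X Y : Type*}

theorem mapsTo_cthickening_of_lipschitzWith_one [PseudoMetricSpace X] [PseudoMetricSpace Y]
    {T : X → Y} (hT : LipschitzWith 1 T) {A : Set X} {B : Set Y} (hAB : MapsTo T A B) (δ : ℝ) :
    MapsTo T (cthickening δ A) (cthickening δ B) := by
  refine fun x (hx : infEDist x A ≤ _) ↦ mem_cthickening_iff.2 (le_trans ?_ hx)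
  refine le_infEDist.2 fun y hy ↦ (infEDist_le_edist_of_mem (hAB hy)).trans ?_
  simpa using hT x y

/-- `T` is a similarity with ratio `ρ`: it multiplies all distances by `ρ`. Unlike the bundled
`Dilation`, the ratio is part of the data, so it is determined even on a one-point space. -/
def IsSimilarity [PseudoMetricSpace X] [PseudoMetricSpace Y] (ρ : ℝ≥0) (T : X → Y) : Prop :=
  ∀ x y, dist (T x) (T y) = ρ * dist x y

namespace IsSimilarity

section Metric

variable [PseudoMetricSpace X] [PseudoMetricSpace Y] {ρ : ℝ≥0} {T : X → Y}

theorem lipschitzWith (hT : IsSimilarity ρ T) : LipschitzWith ρ T :=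
  LipschitzWith.of_dist_le_mul fun x y ↦ (hT x y).le

theorem antilipschitzWith (hT : IsSimilarity ρ T) (hρ : 0 < ρ) : AntilipschitzWith ρ⁻¹ T :=
  AntilipschitzWith.of_le_mul_dist fun x y ↦ by
    rw [hT, NNReal.coe_inv, inv_mul_cancel_left₀ (NNReal.coe_pos.2 hρ).ne']

theorem infDist_image (hT : IsSimilarity ρ T) {F : Set X} (hF : F.Nonempty) (x : X) :
    infDist (T x) (T '' F) = ρ * infDist x F := by
  rcases eq_zero_or_pos ρ with rfl | hρ
  · obtain ⟨y, hy⟩ := hF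
    refine le_antisymm ((infDist_le_dist_of_mem (mem_image_of_mem T hy)).trans ?_) ?_
    · simp [hT x y]
    · simpa using infDist_nonneg
  have hρ' : (0 : ℝ) < ρ := hρ
  apply le_antisymm
  · rw [← div_le_iff₀' hρ', le_infDist hF]
    intro y hy
    rw [div_le_iff₀' hρ', ← hT]
    exact infDist_le_dist_of_mem (mem_image_of_mem T hy)
  · rw [le_infDist (hF.image T)]
    rintro _ ⟨y, hy, rfl⟩
    rw [hT]
    exact mul_le_mul_of_nonneg_left (infDist_le_dist_of_mem hy) hρ'.le

theorem preimage_closedBall (hT : IsSimilarity ρ T) (hρ : 0 < ρ) (x : X) (t : ℝ) :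
    T ⁻¹' closedBall (T x) t = closedBall x (t / ρ) := by
  ext y
  rw [mem_preimage, mem_closedBall, mem_closedBall, hT, le_div_iff₀' (NNReal.coe_pos.2 hρ)]

end Metric

theorem hausdorffMeasure_image [MetricSpace X] [MetricSpace Y] [MeasurableSpace X]
    [BorelSpace X] [MeasurableSpace Y] [BorelSpace Y] {ρ : ℝ≥0} {T : X → Y}
    (hT : IsSimilarity ρ T) (hρ : 0 < ρ) {s : ℝ} (hs : 0 ≤ s) (A : Set X) :
    μH[s] (T '' A) = (ρ : ℝ≥0∞) ^ s * μH[s] A := by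
  refine le_antisymm (hT.lipschitzWith.hausdorffMeasure_image_le hs A) ?_
  have hρ_ne : (ρ : ℝ≥0∞) ^ s ≠ 0 := by simp [hρ.ne']
  have hρ_top : (ρ : ℝ≥0∞) ^ s ≠ ⊤ := by simp [hs]
  rw [mul_comm, ← ENNReal.le_div_iff_mul_le (.inl hρ_ne) (.inl hρ_top), ENNReal.div_eq_inv_mul,
    ← ENNReal.inv_rpow, ← ENNReal.coe_inv hρ.ne']
  exact (hT.antilipschitzWith hρ).le_hausdorffMeasure_image hs A

section Normed

variable {E : Type*} [NormedAddCommGroup E] [NormedSpace ℝ E] [StrictConvexSpace ℝ E]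
  [FiniteDimensional ℝ E] {ρ : ℝ≥0} {T : E → E}

theorem surjective (hT : IsSimilarity ρ T) (hρ : 0 < ρ) : Function.Surjective T := by
  have hiso : Isometry fun x ↦ (ρ : ℝ)⁻¹ • T x := Isometry.of_dist_eq fun x y ↦ by
    rw [dist_smul₀, hT, norm_inv, NNReal.norm_eq,
      inv_mul_cancel_left₀ (NNReal.coe_pos.2 hρ).ne']
  inhabit E
  intro y
  obtain ⟨x, hx⟩ :=
    (hiso.affineIsometryOfStrictConvexSpace.toAffineIsometryEquiv rfl).surjective ((ρ : ℝ)⁻¹ • y)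
  exact ⟨x, smul_right_injective E (inv_ne_zero (NNReal.coe_pos.2 hρ).ne') hx⟩

theorem isOpenMap (hT : IsSimilarity ρ T) (hρ : 0 < ρ) : IsOpenMap T :=
  (((hT.antilipschitzWith hρ).isUniformEmbedding
    hT.lipschitzWith.uniformContinuous).isEmbedding.toHomeomorphOfSurjective
      (hT.surjective hρ)).isOpenMap

end Normed

end IsSimilarity

end Similarities

section Hutchinson

open scoped BoundedContinuousFunction

theorem abs_integral_sub_integral_le_of_le_add {X : Type*} [TopologicalSpace X]
    [MeasurableSpace X] [OpensMeasurableSpace X] {μ ν ρ : Measure X} [IsFiniteMeasure μ]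
    [IsFiniteMeasure ν] [IsFiniteMeasure ρ] (hle : μ ≤ ν + ρ) (huniv : μ univ = ν univ)
    (f : X →ᵇ ℝ) : |∫ x, f x ∂μ - ∫ x, f x ∂ν| ≤ 2 * ‖f‖ * ρ.real univ := by
  set κ := ν + ρ - μ
  have hκ : κ + μ = ν + ρ := Measure.sub_add_cancel_of_le hle
  have hκ_fin : IsFiniteMeasure κ := isFiniteMeasure_of_le (ν + ρ) Measure.sub_le
  have hκ_univ : κ.real univ = ρ.real univ := by
    have h := congr($hκ univ)
    rw [Measure.add_apply, Measure.add_apply, huniv, add_comm,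
      ENNReal.add_right_inj (measure_ne_top ν univ)] at h
    exact congr(ENNReal.toReal $h)
  have hint := congr(∫ x, f x ∂$hκ)
  rw [integral_add_measure (f.integrable κ) (f.integrable μ),
    integral_add_measure (f.integrable ν) (f.integrable ρ)] at hint
  calc |∫ x, f x ∂μ - ∫ x, f x ∂ν| = |∫ x, f x ∂ρ - ∫ x, f x ∂κ| := by
        congr 1
        linarith
    _ ≤ ρ.real univ * ‖f‖ + κ.real univ * ‖f‖ :=
        (abs_sub _ _).trans (add_le_add (f.norm_integral_le_mul_norm ρ)
          (f.norm_integral_le_mul_norm κ))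
    _ = 2 * ‖f‖ * ρ.real univ := by
        rw [hκ_univ]
        ring

variable {ι X : Type*} [Fintype ι] [MeasurableSpace X]

/-- The Hutchinson operator of the maps `S i` with weights `w i`, which sends a measure to the
weighted sum of its images. Self-similar measures are its fixed points. -/
noncomputable def hutchinson (S : ι → X → X) (w : ι → ℝ≥0) (μ : Measure X) : Measure X :=
  ∑ i, w i • μ.map (S i)

namespace hutchinson

variable {S : ι → X → X} {w : ι → ℝ≥0} {μ ν : Measure X}

theorem apply (hS : ∀ i, Measurable (S i)) {A : Set X} (hA : MeasurableSet A) :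
    hutchinson S w μ A = ∑ i, w i * μ (S i ⁻¹' A) := by
  simp [hutchinson, Measure.map_apply (hS _) hA]

theorem mono (hS : ∀ i, Measurable (S i)) (h : μ ≤ ν) : hutchinson S w μ ≤ hutchinson S w ν :=
  Measure.le_iff.2 fun A hA ↦ by
    rw [apply hS hA, apply hS hA]
    exact Finset.sum_le_sum fun i _ ↦ mul_le_mul_right (h _) _

theorem add (hS : ∀ i, Measurable (S i)) :
    hutchinson S w (μ + ν) = hutchinson S w μ + hutchinson S w ν := by
  simp only [hutchinson, Measure.map_add _ _ (hS _), smul_add, Finset.sum_add_distrib]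

theorem smul (c : ℝ≥0∞) : hutchinson S w (c • μ) = c • hutchinson S w μ := by
  simp only [hutchinson, Measure.map_smul, Finset.smul_sum, smul_comm c]

theorem apply_univ (hS : ∀ i, Measurable (S i)) (hw : ∑ i, w i = 1) (μ : Measure X) :
    hutchinson S w μ univ = μ univ := by
  simp only [apply hS MeasurableSet.univ, preimage_univ, ← Finset.sum_mul]
  rw [← ENNReal.ofNNReal_finsetSum, hw, ENNReal.coe_one, one_mul]

theorem iterate_apply_univ (hS : ∀ i, Measurable (S i)) (hw : ∑ i, w i = 1) (n : ℕ) :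
    (hutchinson S w)^[n] μ univ = μ univ := by
  induction n with
  | zero => rfl
  | succ n ih => rw [Function.iterate_succ_apply', apply_univ hS hw, ih]

theorem ae_mem_iterate (hS : ∀ i, Measurable (S i)) {K : Set X} (hK : MeasurableSet K)
    (hSK : ∀ i, MapsTo (S i) K K) (hμK : ∀ᵐ x ∂μ, x ∈ K) (n : ℕ) :
    ∀ᵐ x ∂(hutchinson S w)^[n] μ, x ∈ K := by
  induction n with
  | zero => exact hμK
  | succ n ih =>
    rw [Function.iterate_succ_apply']
    refine (apply hS hK.compl).trans (Finset.sum_eq_zero fun i _ ↦ ?_)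
    have hnull : (hutchinson S w)^[n] μ (S i ⁻¹' Kᶜ) = 0 :=
      measure_mono_null (fun x hx hxK ↦ hx (hSK i hxK)) ih
    rw [hnull, mul_zero]

theorem isFiniteMeasure_iterate [IsFiniteMeasure μ] (hS : ∀ i, Measurable (S i))
    (hw : ∑ i, w i = 1) (n : ℕ) : IsFiniteMeasure ((hutchinson S w)^[n] μ) :=
  ⟨by rw [iterate_apply_univ hS hw]; exact measure_lt_top μ univ⟩

theorem exists_le_iterate_add (hS : ∀ i, Measurable (S i)) (hw : ∑ i, w i = 1)
    {ρ : Measure X} (hμ : μ ≤ hutchinson S w μ + ρ) (n : ℕ) :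
    ∃ ρ' : Measure X, μ ≤ (hutchinson S w)^[n] μ + ρ' ∧ ρ' univ = n * ρ univ := by
  induction n with
  | zero => exact ⟨0, by simp⟩
  | succ n ih =>
    obtain ⟨ρ', hle, huniv⟩ := ih
    refine ⟨hutchinson S w ρ' + ρ, ?_, ?_⟩
    · rw [Function.iterate_succ_apply', ← add_assoc, ← add hS]
      exact hμ.trans (add_le_add_left (mono hS hle) ρ)
    · rw [Measure.add_apply, apply_univ hS hw, huniv]
      push_cast
      ring

section Topological

variable [TopologicalSpace X] [BorelSpace X]

theorem integral_eq_sum [IsFiniteMeasure μ] (hS : ∀ i, Continuous (S i)) (f : X →ᵇ ℝ) :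
    ∫ x, f x ∂hutchinson S w μ = ∑ i, w i * ∫ x, f (S i x) ∂μ := by
  rw [hutchinson, integral_finsetSum_measure fun i _ ↦ (f.integrable _).smul_measure_nnreal]
  refine Finset.sum_congr rfl fun i _ ↦ ?_
  rw [integral_smul_nnreal_measure, integral_map (hS i).aemeasurable
    f.continuous.measurable.aestronglyMeasurable, NNReal.smul_def, smul_eq_mul]

theorem abs_integral_sub_iterate_le [IsFiniteMeasure μ] {ρ : Measure X} [IsFiniteMeasure ρ]
    (hS : ∀ i, Continuous (S i)) (hw : ∑ i, w i = 1) (hμ : μ ≤ hutchinson S w μ + ρ) (n : ℕ)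
    (f : X →ᵇ ℝ) :
    |∫ x, f x ∂μ - ∫ x, f x ∂(hutchinson S w)^[n] μ| ≤ 2 * ‖f‖ * (n * ρ.real univ) := by
  have hS' (i : ι) : Measurable (S i) := (hS i).measurable
  obtain ⟨ρ', hle, huniv⟩ := exists_le_iterate_add hS' hw hμ n
  have := isFiniteMeasure_iterate (μ := μ) hS' hw n
  have : IsFiniteMeasure ρ' := ⟨by
    rw [huniv]
    exact ENNReal.mul_lt_top (ENNReal.natCast_lt_top n) (measure_lt_top ρ univ)⟩
  convert abs_integral_sub_integral_le_of_le_add hle (iterate_apply_univ hS' hw n).symm f using 2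
  simp [Measure.real, huniv]

end Topological

variable [PseudoMetricSpace X] [BorelSpace X] {K : Set X} {q : ℝ≥0}

theorem abs_integral_sub_mul_integral_le {m : Measure X} [IsFiniteMeasure μ]
    [IsProbabilityMeasure m] (hμK : ∀ᵐ x ∂μ, x ∈ K) (hmK : ∀ᵐ x ∂m, x ∈ K) {f : X →ᵇ ℝ} {η : ℝ}
    (hf : ∀ x ∈ K, ∀ y ∈ K, |f x - f y| ≤ η) :
    |∫ x, f x ∂μ - μ.real univ * ∫ x, f x ∂m| ≤ η * μ.real univ := by
  have hpoint (x : X) (hx : x ∈ K) : ‖f x - ∫ y, f y ∂m‖ ≤ η := by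
    have hx_int : f x - ∫ y, f y ∂m = ∫ y, (f x - f y) ∂m := by
      rw [integral_sub (integrable_const _) (f.integrable m)]
      simp
    rw [hx_int]
    simpa using norm_integral_le_of_norm_le_const (f := fun y ↦ f x - f y)
      (hmK.mono fun y hy ↦ hf x hx y hy)
  have hμ_int : ∫ x, f x ∂μ - μ.real univ * ∫ x, f x ∂m = ∫ x, (f x - ∫ y, f y ∂m) ∂μ := by
    rw [integral_sub (f.integrable μ) (integrable_const _)]
    simp
  rw [hμ_int]
  exact norm_integral_le_of_norm_le_const (hμK.mono hpoint)

/-- Applying `hutchinson S w` replaces `f` by the `f ∘ S i`, whose oscillation is that of `f` at a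
scale smaller by the factor `q`. -/
theorem abs_integral_iterate_sub_mul_le {m : Measure X} [IsFiniteMeasure μ]
    [IsProbabilityMeasure m] (hS : ∀ i, LipschitzWith q (S i)) (hw : ∑ i, w i = 1)
    (hK : ∀ i, MapsTo (S i) K K) (hμK : ∀ᵐ x ∂μ, x ∈ K) (hmK : ∀ᵐ x ∂m, x ∈ K) {δ : ℝ}
    (hδ : ∀ x ∈ K, ∀ y ∈ K, dist x y ≤ δ) {η : ℝ} (n : ℕ) {f : X →ᵇ ℝ}
    (hf : ∀ x ∈ K, ∀ y ∈ K, dist x y ≤ q ^ n * δ → |f x - f y| ≤ η) :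
    |∫ x, f x ∂(hutchinson S w)^[n] μ - μ.real univ * ∫ x, f x ∂(hutchinson S w)^[n] m| ≤
      η * μ.real univ := by
  have hSm (i : ι) : Measurable (S i) := (hS i).continuous.measurable
  induction n generalizing f with
  | zero =>
    exact abs_integral_sub_mul_integral_le hμK hmK fun x hx y hy ↦
      hf x hx y hy (by simpa using hδ x hx y hy)
  | succ n ih =>
    have := isFiniteMeasure_iterate (μ := μ) hSm hw n
    have := isFiniteMeasure_iterate (μ := m) hSm hw n
    have hterm (i : ι) := ih (f := f.compContinuous ⟨S i, (hS i).continuous⟩) fun x hx y hy hxy ↦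
      hf _ (hK i hx) _ (hK i hy) <| ((hS i).dist_le_mul x y).trans <| by
        rw [pow_succ', mul_assoc]
        exact mul_le_mul_of_nonneg_left hxy q.2
    rw [Function.iterate_succ_apply', Function.iterate_succ_apply',
      integral_eq_sum fun i ↦ (hS i).continuous, integral_eq_sum fun i ↦ (hS i).continuous,
      Finset.mul_sum, ← Finset.sum_sub_distrib]
    calc _ ≤ ∑ i, (w i : ℝ) * (η * μ.real univ) := by
          refine (Finset.abs_sum_le_sum_abs _ _).trans (Finset.sum_le_sum fun i _ ↦ ?_)
          rw [mul_left_comm, ← mul_sub, abs_mul, NNReal.abs_eq]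
          exact mul_le_mul_of_nonneg_left (hterm i) (w i).2
      _ = η * μ.real univ := by
          rw [← Finset.sum_mul, ← NNReal.coe_sum, hw, NNReal.coe_one, one_mul]

end hutchinson

end Hutchinson

section Localization

open scoped BoundedContinuousFunction
open ProbabilityTheory

variable {ι X : Type*} [Fintype ι] [MeasurableSpace X] {S : ι → X → X} {w : ι → ℝ≥0}

theorem hutchinson_eq_self_of_le {m : Measure X} [IsFiniteMeasure m]
    (hS : ∀ i, Measurable (S i)) (hw : ∑ i, w i = 1) (hm : m ≤ hutchinson S w m) :
    hutchinson S w m = m := by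
  have hsub : hutchinson S w m - m = 0 := by
    rw [← Measure.measure_univ_eq_zero, Measure.sub_apply .univ hm,
      hutchinson.apply_univ hS hw, tsub_self]
  simpa [hsub] using (Measure.sub_add_cancel_of_le hm).symm

section Contraction

variable [PseudoMetricSpace X] [BorelSpace X] {K : Set X} {q : ℝ≥0} {m : Measure X}
  [IsProbabilityMeasure m]

theorem exists_forall_abs_integral_sub_mul_le_of_le_hutchinson_add
    (hS : ∀ i, LipschitzWith q (S i)) (hq : q < 1) (hw : ∑ i, w i = 1) (hK : IsCompact K)
    (hSK : ∀ i, MapsTo (S i) K K) (hm : hutchinson S w m = m) (hmK : ∀ᵐ x ∂m, x ∈ K)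
    (f : X →ᵇ ℝ) {η : ℝ} (hη : 0 < η) :
    ∃ n : ℕ, ∀ μ ρ : Measure X, IsFiniteMeasure μ → IsFiniteMeasure ρ → (∀ᵐ x ∂μ, x ∈ K) →
      μ ≤ hutchinson S w μ + ρ →
      |∫ x, f x ∂μ - μ.real univ * ∫ x, f x ∂m| ≤
        2 * ‖f‖ * (n * ρ.real univ) + η * μ.real univ := by
  obtain ⟨δ, hδ, hfδ⟩ := Metric.uniformContinuousOn_iff.1
    (hK.uniformContinuousOn_of_continuous f.continuous.continuousOn) η hη
  have hpow : Tendsto (fun n : ℕ ↦ (q : ℝ) ^ n * diam K) atTop (𝓝 (0 * diam K)) :=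
    (tendsto_pow_atTop_nhds_zero_of_lt_one q.2 hq).mul_const _
  rw [zero_mul] at hpow
  obtain ⟨n, hn⟩ := (hpow.eventually_lt_const hδ).exists
  refine ⟨n, fun μ ρ _ _ hμK hμ ↦ ?_⟩
  have hiterate := hutchinson.abs_integral_sub_iterate_le (fun i ↦ (hS i).continuous) hw hμ n f
  have hcontract := hutchinson.abs_integral_iterate_sub_mul_le (η := η) hS hw hSK hμK hmK
    (fun x hx y hy ↦ dist_le_diam_of_mem hK.isBounded hx hy) n (f := f)
    fun x hx y hy hxy ↦ (hfδ x hx y hy (hxy.trans_lt hn)).le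
  rw [Function.iterate_fixed hm] at hcontract
  exact (abs_sub_le _ _ _).trans (add_le_add hiterate hcontract)

theorem tendsto_mul_integral_of_le_hutchinson_add (hS : ∀ i, LipschitzWith q (S i)) (hq : q < 1)
    (hw : ∑ i, w i = 1) (hK : IsCompact K) (hSK : ∀ i, MapsTo (S i) K K)
    (hm : hutchinson S w m = m) (hmK : ∀ᵐ x ∂m, x ∈ K) {α : Type*} {l : Filter α} {c : α → ℝ}
    (hc : ∀ᶠ T in l, 0 ≤ c T) {μ ρ : α → Measure X} [∀ T, IsFiniteMeasure (μ T)]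
    [∀ T, IsFiniteMeasure (ρ T)] (hμK : ∀ T, ∀ᵐ x ∂μ T, x ∈ K)
    (hμ : ∀ T, μ T ≤ hutchinson S w (μ T) + ρ T) {Λ : ℝ}
    (hmass : Tendsto (fun T ↦ c T * (μ T).real univ) l (𝓝 Λ))
    (herror : Tendsto (fun T ↦ c T * (ρ T).real univ) l (𝓝 0)) (f : X →ᵇ ℝ) :
    Tendsto (fun T ↦ c T * ∫ x, f x ∂μ T) l (𝓝 (Λ * ∫ x, f x ∂m)) := by
  suffices hdiff : Tendsto (fun T ↦ c T * (∫ x, f x ∂μ T - (μ T).real univ * ∫ x, f x ∂m)) l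
      (𝓝 0) by
    simpa [mul_sub, mul_assoc] using hdiff.add (hmass.mul_const (∫ x, f x ∂m))
  refine Metric.tendsto_nhds.2 fun ε hε ↦ ?_
  have hη : 0 < ε / (|Λ| + 1) := by positivity
  obtain ⟨n, hn⟩ := exists_forall_abs_integral_sub_mul_le_of_le_hutchinson_add hS hq hw hK hSK hm
    hmK f hη
  have hbound : Tendsto (fun T ↦ 2 * ‖f‖ * n * (c T * (ρ T).real univ) +
      ε / (|Λ| + 1) * (c T * (μ T).real univ)) l
      (𝓝 (2 * ‖f‖ * n * 0 + ε / (|Λ| + 1) * Λ)) := (herror.const_mul _).add (hmass.const_mul _)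
  have hlt : 2 * ‖f‖ * n * 0 + ε / (|Λ| + 1) * Λ < ε := by
    rw [mul_zero, zero_add, div_mul_eq_mul_div, div_lt_iff₀ (by positivity)]
    exact mul_lt_mul_of_pos_left (by linarith [le_abs_self Λ]) hε
  filter_upwards [hc, hbound.eventually_lt_const hlt] with T hcT hT
  rw [dist_zero_right, norm_mul, Real.norm_of_nonneg hcT, Real.norm_eq_abs]
  refine lt_of_le_of_lt (mul_le_mul_of_nonneg_left
    (hn _ _ inferInstance inferInstance (hμK T) (hμ T)) hcT) (lt_of_eq_of_lt ?_ hT)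
  ring

end Contraction

/-- The occupation measure of a family `ν t` of measures over the time interval `(a, b]`, i.e. the
measure `∫ t in a..b, ν t`. -/
noncomputable def occupation (ν : Kernel ℝ X) (a b : ℝ) : Measure X :=
  ν ∘ₘ volume.restrict (Ioc a b)

namespace occupation

variable {ν : Kernel ℝ X} {a b : ℝ}

theorem apply {A : Set X} (hA : MeasurableSet A) :
    occupation ν a b A = ∫⁻ t in Ioc a b, ν t A :=
  Measure.bind_apply hA ν.aemeasurable

theorem ae_mem {K : Set X} (hK : MeasurableSet K) (hν : ∀ t, a ≤ t → ∀ᵐ x ∂ν t, x ∈ K) :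
    ∀ᵐ x ∂occupation ν a b, x ∈ K := by
  refine (apply hK.compl).trans (setLIntegral_eq_zero measurableSet_Ioc fun t ht ↦ ?_)
  exact hν t ht.1.le

theorem isFiniteMeasure_of_le {M : ℝ≥0∞} (hM : M ≠ ⊤) (hν : ∀ t, a ≤ t → ν t univ ≤ M) :
    IsFiniteMeasure (occupation ν a b) := by
  refine ⟨(apply .univ).trans_lt ((setLIntegral_mono measurable_const
    fun t ht ↦ hν t ht.1.le).trans_lt ?_)⟩
  simpa using ENNReal.mul_lt_top hM.lt_top ENNReal.ofReal_lt_top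

theorem integral_eq [TopologicalSpace X] [BorelSpace X] [IsFiniteMeasure (occupation ν a b)]
    (f : X →ᵇ ℝ) : ∫ x, f x ∂occupation ν a b = ∫ t in Ioc a b, ∫ x, f x ∂ν t := by
  have hcomp : occupation ν a b = (ν ∘ₖ Kernel.const Unit (volume.restrict (Ioc a b))) () :=
    Measure.comp_eq_comp_const_apply
  have hint := f.integrable (occupation ν a b)
  rw [hcomp] at hint ⊢
  rw [Kernel.integral_comp hint, Kernel.const_apply]

theorem integrableOn_real_univ [IsFiniteMeasure (occupation ν a b)] :
    IntegrableOn (fun t ↦ (ν t).real univ) (Ioc a b) :=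
  integrable_toReal_of_lintegral_ne_top (ν.measurable_coe .univ).aemeasurable
    ((apply .univ).symm.trans_ne (measure_ne_top (occupation ν a b) univ))

theorem real_univ [IsFiniteMeasure (occupation ν a b)] :
    (occupation ν a b).real univ = ∫ t in Ioc a b, (ν t).real univ := by
  have hfin : ∫⁻ t in Ioc a b, ν t univ ≠ ⊤ :=
    (apply .univ).symm.trans_ne (measure_ne_top (occupation ν a b) univ)
  rw [Measure.real, apply .univ]
  exact (integral_toReal (ν.measurable_coe .univ).aemeasurable
    (ae_lt_top (ν.measurable_coe .univ) hfin)).symm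

theorem le_sum_smul_map (hS : ∀ i, Measurable (S i)) {s : ι → ℝ}
    (hν : ∀ t, ν t ≤ ∑ i, w i • (ν (t - s i)).map (S i)) :
    occupation ν a b ≤ ∑ i, w i • (occupation ν (a - s i) (b - s i)).map (S i) := by
  refine Measure.le_iff.2 fun A hA ↦ ?_
  have hshift (i : ι) : ∫⁻ t in Ioc a b, ν (t - s i) (S i ⁻¹' A) =
      occupation ν (a - s i) (b - s i) (S i ⁻¹' A) := by
    rw [apply (hS i hA), ← (measurePreserving_sub_right volume (s i)).setLIntegral_comp_preimage
      measurableSet_Ioc (ν.measurable_coe (hS i hA))]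
    simp
  calc occupation ν a b A = ∫⁻ t in Ioc a b, ν t A := apply hA
    _ ≤ ∫⁻ t in Ioc a b, ∑ i, w i * ν (t - s i) (S i ⁻¹' A) :=
        lintegral_mono fun t ↦ (hν t A).trans_eq (by simp [Measure.map_apply (hS _) hA])
    _ = ∑ i, w i * occupation ν (a - s i) (b - s i) (S i ⁻¹' A) := by
        have hmeas (i : ι) : Measurable fun t ↦ ν (t - s i) (S i ⁻¹' A) :=
          (ν.measurable_coe (hS i hA)).comp (measurable_sub_const (s i))
        rw [lintegral_finsetSum _ fun i _ ↦ (hmeas i).const_mul _]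
        simp_rw [lintegral_const_mul _ (hmeas _), hshift]
    _ = _ := by simp [Measure.map_apply (hS _) hA]

theorem sub_sub_le_add {s : ℝ} (hs : 0 ≤ s) :
    occupation ν (a - s) (b - s) ≤ occupation ν a b + occupation ν (a - s) a := by
  refine Measure.le_iff.2 fun A hA ↦ ?_
  rw [Measure.add_apply, apply hA, apply hA, apply hA, add_comm]
  refine (lintegral_mono_set fun t ht ↦ ?_).trans (lintegral_union_le _ _ _)
  rcases le_or_gt t a with hta | hat
  · exact .inl ⟨ht.1, hta⟩
  · exact .inr ⟨hat, ht.2.trans (sub_le_self b hs)⟩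

theorem le_hutchinson_add (hS : ∀ i, Measurable (S i)) {s : ι → ℝ} (hs : ∀ i, 0 ≤ s i)
    (hν : ∀ t, ν t ≤ ∑ i, w i • (ν (t - s i)).map (S i)) :
    occupation ν a b ≤ hutchinson S w (occupation ν a b) +
      ∑ i, w i • (occupation ν (a - s i) a).map (S i) := by
  refine (le_sum_smul_map hS hν).trans ?_
  rw [hutchinson, ← Finset.sum_add_distrib]
  refine Finset.sum_le_sum fun i _ ↦ ?_
  rw [← smul_add, ← Measure.map_add _ _ (hS i)]
  exact fun A ↦ mul_le_mul_right (Measure.map_mono (sub_sub_le_add (hs i)) (hS i) A) _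

theorem real_univ_le_sum (hS : ∀ i, Measurable (S i)) {s : ι → ℝ}
    [∀ a b, IsFiniteMeasure (occupation ν a b)]
    (hν : ∀ t, ν t ≤ ∑ i, w i • (ν (t - s i)).map (S i)) :
    (occupation ν a b).real univ ≤
      ∑ i, w i * (occupation ν (a - s i) (b - s i)).real univ := by
  refine (ENNReal.toReal_mono (measure_ne_top _ _) (le_sum_smul_map hS hν univ)).trans_eq ?_
  simp [Measure.map_apply (hS _), ENNReal.toReal_sum, ENNReal.mul_eq_top, Measure.real]

theorem exists_tendsto_inv_mul_real_univ (hS : ∀ i, Measurable (S i)) {s : ι → ℝ}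
    (hs : ∀ i, 0 < s i) (hw_pos : ∀ i, 0 < w i) (hw : ∑ i, w i = 1)
    [∀ a b, IsFiniteMeasure (occupation ν a b)]
    (hν : ∀ t, ν t ≤ ∑ i, w i • (ν (t - s i)).map (S i)) :
    ∃ Λ, ∀ a, Tendsto (fun T ↦ T⁻¹ * (occupation ν a T).real univ) atTop (𝓝 Λ) := by
  have hint (a b : ℝ) : IntervalIntegrable (fun t ↦ (ν t).real univ) volume a b :=
    ⟨integrableOn_real_univ, integrableOn_real_univ⟩
  set U : ℝ → ℝ := fun T ↦ ∫ t in (0 : ℝ)..T, (ν t).real univ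
  have hsub (a b : ℝ) (hab : a ≤ b) : U b - U a = (occupation ν a b).real univ := by
    rw [real_univ, intervalIntegral.integral_interval_sub_left (hint 0 b) (hint 0 a),
      intervalIntegral.integral_of_le hab]
  obtain ⟨Λ, hΛ⟩ := exists_tendsto_inv_mul_atTop_of_monotone (w := fun i ↦ (w i : ℝ)) (U := U)
    hw_pos (mod_cast hw) hs (fun a b hab ↦ sub_nonneg.1 (hsub a b hab ▸ measureReal_nonneg))
    fun a b hab ↦ by
      simp only [hsub a b hab, hsub _ _ (sub_le_sub_right hab _)]
      exact real_univ_le_sum hS hν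
  refine ⟨Λ, fun a ↦ ?_⟩
  have hlim := hΛ.sub (tendsto_inv_atTop_zero.mul_const (U a))
  rw [zero_mul, sub_zero] at hlim
  refine hlim.congr' ?_
  filter_upwards [eventually_ge_atTop a] with T hT
  rw [← mul_sub, hsub a T hT]

end occupation

theorem exists_forall_tendsto_inv_mul_integral_occupation [MetricSpace X] [BorelSpace X]
    {K : Set X} {q : ℝ≥0} {m : Measure X} [IsProbabilityMeasure m] {ν : Kernel ℝ X}
    [∀ a b, IsFiniteMeasure (occupation ν a b)] {s : ι → ℝ} {a : ℝ}
    (hS : ∀ i, LipschitzWith q (S i)) (hq : q < 1) (hw_pos : ∀ i, 0 < w i) (hw : ∑ i, w i = 1)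
    (hs : ∀ i, 0 < s i) (hK : IsCompact K) (hSK : ∀ i, MapsTo (S i) K K)
    (hm : hutchinson S w m = m) (hmK : ∀ᵐ x ∂m, x ∈ K)
    (hν : ∀ t, ν t ≤ ∑ i, w i • (ν (t - s i)).map (S i))
    (hνK : ∀ t, a ≤ t → ∀ᵐ x ∂ν t, x ∈ K) :
    ∃ Λ : ℝ, ∀ f : X →ᵇ ℝ,
      Tendsto (fun T ↦ T⁻¹ * ∫ t in Ioc a T, ∫ x, f x ∂ν t) atTop
        (𝓝 (Λ * ∫ x, f x ∂m)) := by
  have hSm (i : ι) : Measurable (S i) := (hS i).continuous.measurable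
  obtain ⟨Λ, hΛ⟩ := occupation.exists_tendsto_inv_mul_real_univ hSm hs hw_pos hw hν
  refine ⟨Λ, fun f ↦ ?_⟩
  simp_rw [← occupation.integral_eq]
  refine tendsto_mul_integral_of_le_hutchinson_add hS hq hw hK hSK hm hmK
    ((eventually_ge_atTop 0).mono fun T hT ↦ inv_nonneg.2 hT)
    (fun T ↦ occupation.ae_mem hK.measurableSet hνK)
    (fun T ↦ occupation.le_hutchinson_add hSm (fun i ↦ (hs i).le) hν) (hΛ a) ?_ f
  simpa using tendsto_inv_atTop_zero.mul_const
    ((∑ i, w i • (occupation ν (a - s i) a).map (S i)).real univ)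

end Localization

section Attractors

theorem restrict_hausdorffMeasure_le_sum_smul_map {ι X : Type*} [Fintype ι] [MetricSpace X]
    [MeasurableSpace X] [BorelSpace X] {S : ι → X → X} {r : ι → ℝ≥0}
    (hS : ∀ i, LipschitzWith (r i) (S i)) {s : ℝ} (hs : 0 ≤ s) {A : Set X} {B : ι → Set X}
    (hAB : A ⊆ ⋃ i, S i '' B i) :
    (μH[s] : Measure X).restrict A ≤ ∑ i, r i ^ s • (μH[s].restrict (B i)).map (S i) := by
  have hSm (i : ι) : Measurable (S i) := (hS i).continuous.measurable
  refine Measure.le_iff.2 fun V hV ↦ ?_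
  have hcover : V ∩ A ⊆ ⋃ i, S i '' (S i ⁻¹' V ∩ B i) := by
    rintro x ⟨hxV, hxA⟩
    obtain ⟨i, y, hy, rfl⟩ := mem_iUnion.1 (hAB hxA)
    exact mem_iUnion.2 ⟨i, y, ⟨hxV, hy⟩, rfl⟩
  calc μH[s].restrict A V = μH[s] (V ∩ A) := Measure.restrict_apply hV
    _ ≤ ∑ i, μH[s] (S i '' (S i ⁻¹' V ∩ B i)) :=
        (measure_mono hcover).trans (measure_iUnion_fintype_le _ _)
    _ ≤ ∑ i, (r i : ℝ≥0∞) ^ s * μH[s] (S i ⁻¹' V ∩ B i) :=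
        Finset.sum_le_sum fun i _ ↦ (hS i).hausdorffMeasure_image_le hs _
    _ = _ := by
        simp [Measure.map_apply (hSm _) hV, Measure.restrict_apply (hSm _ hV), ENNReal.smul_def,
          ENNReal.coe_rpow_of_nonneg _ hs]

/-- The maps `S i` are contracting similarities with the (positive) ratios `r i`. -/
structure IsSimilarityIFS {ι X : Type*} [PseudoMetricSpace X] (S : ι → X → X) (r : ι → ℝ≥0) :
    Prop where
  ratio_pos : ∀ i, 0 < r i
  ratio_lt_one : ∀ i, r i < 1
  isSimilarity : ∀ i, IsSimilarity (r i) (S i)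

/-- `F` is the attractor (self-similar set) of the maps `S i`. -/
structure IsAttractor {ι X : Type*} [TopologicalSpace X] (S : ι → X → X) (F : Set X) : Prop where
  nonempty : F.Nonempty
  isCompact : IsCompact F
  eq_iUnion : F = ⋃ i, S i '' F

theorem IsAttractor.mapsTo {ι X : Type*} [TopologicalSpace X] {S : ι → X → X} {F : Set X}
    (hF : IsAttractor S F) (i : ι) : MapsTo (S i) F F := fun x hx ↦ by
  rw [hF.eq_iUnion]
  exact mem_iUnion.2 ⟨i, x, hx, rfl⟩

namespace IsSimilarityIFS

variable {ι X : Type*} {S : ι → X → X} {r : ι → ℝ≥0}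

section Metric

variable [PseudoMetricSpace X]

theorem measurable [MeasurableSpace X] [BorelSpace X] (hS : IsSimilarityIFS S r) (i : ι) :
    Measurable (S i) :=
  (hS.isSimilarity i).lipschitzWith.continuous.measurable

theorem exists_ratio_le_lt_one [Finite ι] (hS : IsSimilarityIFS S r) :
    ∃ q : ℝ≥0, q < 1 ∧ ∀ i, r i ≤ q := by
  have := Fintype.ofFinite ι
  exact ⟨Finset.univ.sup r, (Finset.sup_lt_iff zero_lt_one).2 fun i _ ↦ hS.ratio_lt_one i,
    fun i ↦ Finset.le_sup (Finset.mem_univ i)⟩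

theorem exists_pos_le_ratio [Finite ι] (hS : IsSimilarityIFS S r) :
    ∃ p : ℝ≥0, 0 < p ∧ p ≤ 1 ∧ ∀ i, p ≤ r i := by
  have := Fintype.ofFinite ι
  refine ⟨(Finset.univ.sup r⁻¹ ⊔ 1)⁻¹, by simp, inv_le_one_of_one_le₀ le_sup_right, fun i ↦ ?_⟩
  exact inv_le_of_inv_le₀ (hS.ratio_pos i)
    ((Finset.le_sup (f := r⁻¹) (Finset.mem_univ i)).trans le_sup_left)

variable [Fintype ι] {F : Set X} {D : ℝ}

theorem exists_cover_ediam_le (hS : IsSimilarityIFS S r) (hF : IsAttractor S F) (hD : 0 ≤ D)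
    (hr : ∑ i, r i ^ D = 1) {q : ℝ≥0} (hq : ∀ i, r i ≤ q) (n : ℕ) :
    ∃ t : (Fin n → ι) → Set X, F ⊆ ⋃ k, t k ∧ (∀ k, ediam (t k) ≤ q ^ n * ediam F) ∧
      ∑ k, ediam (t k) ^ D ≤ ediam F ^ D := by
  induction n with
  | zero => exact ⟨fun _ ↦ F, fun x hx ↦ mem_iUnion.2 ⟨default, hx⟩, by simp, by simp⟩
  | succ n ih =>
    obtain ⟨t, hcover, hdiam, hsum⟩ := ih
    have himage (i : ι) (A : Set X) : ediam (S i '' A) ≤ r i * ediam A :=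
      (hS.isSimilarity i).lipschitzWith.ediam_image_le A
    refine ⟨fun k ↦ S (k 0) '' t (Fin.tail k), fun x hx ↦ ?_, fun k ↦ ?_, ?_⟩
    · rw [hF.eq_iUnion] at hx
      obtain ⟨i, y, hy, rfl⟩ := mem_iUnion.1 hx
      obtain ⟨k, hk⟩ := mem_iUnion.1 (hcover hy)
      exact mem_iUnion.2 ⟨Fin.cons i k, y, by simpa using hk, by simp⟩
    · rw [pow_succ', mul_assoc]
      exact (himage _ _).trans (mul_le_mul' (mod_cast hq _) (hdiam _))
    · calc ∑ k : Fin (n + 1) → ι, ediam (S (k 0) '' t (Fin.tail k)) ^ D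
          = ∑ i, ∑ k, ediam (S i '' t k) ^ D := by
            rw [← (Fin.consEquiv fun _ ↦ ι).sum_comp, Fintype.sum_prod_type]
            simp [Fin.consEquiv]
        _ ≤ ∑ i, ∑ k, (r i : ℝ≥0∞) ^ D * ediam (t k) ^ D := by
            simp_rw [← ENNReal.mul_rpow_of_nonneg _ _ hD]
            exact Finset.sum_le_sum fun i _ ↦ Finset.sum_le_sum fun k _ ↦
              ENNReal.rpow_le_rpow (himage i (t k)) hD
        _ = ∑ k, ediam (t k) ^ D := by
            simp_rw [← Finset.mul_sum, ← Finset.sum_mul, ← ENNReal.coe_rpow_of_nonneg _ hD]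
            rw [← ENNReal.ofNNReal_finsetSum, hr, ENNReal.coe_one, one_mul]
        _ ≤ ediam F ^ D := hsum

end Metric

variable [Fintype ι] [MetricSpace X] [MeasurableSpace X] [BorelSpace X] {F : Set X} {D : ℝ}

theorem hausdorffMeasure_lt_top (hS : IsSimilarityIFS S r) (hF : IsAttractor S F) (hD : 0 ≤ D)
    (hr : ∑ i, r i ^ D = 1) : μH[D] F < ⊤ := by
  obtain ⟨q, hq_lt, hq⟩ := hS.exists_ratio_le_lt_one
  choose t hcover hdiam hsum using hS.exists_cover_ediam_le hF hD hr hq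
  have hF_diam : ediam F ≠ ⊤ := hF.isCompact.isBounded.ediam_ne_top
  have hlim : Tendsto (fun n : ℕ ↦ (q : ℝ≥0∞) ^ n * ediam F) atTop (𝓝 0) := by
    simpa using ENNReal.Tendsto.mul_const (ENNReal.tendsto_pow_atTop_nhds_zero_of_lt_one
      (ENNReal.coe_lt_one_iff.2 hq_lt)) (.inr hF_diam)
  calc μH[D] F ≤ liminf (fun n ↦ ∑ k, ediam (t n k) ^ D) atTop :=
        Measure.hausdorffMeasure_le_liminf_sum D F _ hlim t (.of_forall hdiam) (.of_forall hcover)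
    _ ≤ liminf (fun _ : ℕ ↦ ediam F ^ D) atTop := liminf_le_liminf (.of_forall hsum)
    _ < ⊤ := by simpa using ENNReal.rpow_lt_top_of_nonneg hD hF_diam

theorem hutchinson_smul_restrict_hausdorffMeasure (hS : IsSimilarityIFS S r)
    (hF : IsAttractor S F) (hD : 0 ≤ D) (hr : ∑ i, r i ^ D = 1) (c : ℝ≥0∞) :
    hutchinson S (fun i ↦ r i ^ D) (c • μH[D].restrict F) = c • μH[D].restrict F := by
  have : IsFiniteMeasure ((μH[D] : Measure X).restrict F) :=
    ⟨by simpa using hS.hausdorffMeasure_lt_top hF hD hr⟩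
  rw [hutchinson.smul, hutchinson_eq_self_of_le hS.measurable hr]
  exact restrict_hausdorffMeasure_le_sum_smul_map
    (fun i ↦ (hS.isSimilarity i).lipschitzWith) hD hF.eq_iUnion.subset

end IsSimilarityIFS

end Attractors

section Positivity

theorem exists_mem_Ioo_rpow_le_add {a b η : ℝ≥0∞} (hab : a < b) {s : ℝ} (hs : 0 ≤ s)
    (hη : η ≠ 0) : ∃ c ∈ Ioo a b, c ^ s ≤ a ^ s + η := by
  have hlt : a ^ s < a ^ s + η :=
    ENNReal.lt_add_right (ENNReal.rpow_ne_top_of_nonneg hs hab.ne_top) hη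
  have hpow : ∀ᶠ c in 𝓝[>] a, c ^ s < a ^ s + η := nhdsWithin_le_nhds
    ((ENNReal.continuous_rpow_const (y := s)).continuousAt.eventually_lt_const hlt)
  have := nhdsGT_neBot_of_exists_gt ⟨b, hab⟩
  obtain ⟨c, hc, hc_mem⟩ := (hpow.and (Ioo_mem_nhdsGT hab)).exists
  exact ⟨c, hc_mem, hc.le⟩

section MassDistribution

variable {X : Type*} [MetricSpace X] [MeasurableSpace X] [BorelSpace X] {F : Set X} {D : ℝ}

theorem exists_ball_cover_of_hausdorffMeasure_eq_zero [Nonempty X] (hD : 0 < D)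
    (hF : μH[D] F = 0) {η : ℝ≥0∞} (hη : η ≠ 0) :
    ∃ (z : ℕ → X) (ρ : ℕ → ℝ≥0), (∀ k, 0 < ρ k) ∧ F ⊆ ⋃ k, ball (z k) (ρ k) ∧
      ∑' k, (ρ k : ℝ≥0∞) ^ D ≤ η := by
  have hhalf : η / 2 ≠ 0 := by simpa using hη
  rw [Measure.hausdorffMeasure_apply] at hF
  simp only [ENNReal.iSup_eq_zero] at hF
  have hlt := (hF 1 one_pos).trans_lt (pos_iff_ne_zero.2 hhalf)
  simp only [iInf_lt_iff] at hlt
  obtain ⟨t, hcover, hdiam, hsum⟩ := hlt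
  obtain ⟨η', hη'_pos, hη'⟩ := ENNReal.exists_pos_sum_of_countable' hhalf ℕ
  choose c hc hcD using fun k ↦ exists_mem_Ioo_rpow_le_add
    ((hdiam k).trans_lt ENNReal.one_lt_top) hD.le (hη'_pos k).ne'
  have hball (k : ℕ) : ∃ z, t k ⊆ ball z (c k).toNNReal := by
    rcases (t k).eq_empty_or_nonempty with hempty | ⟨z, hz⟩
    · exact ⟨Classical.arbitrary X, by simp [hempty]⟩
    · refine ⟨z, fun x hx ↦ ?_⟩
      have hxz := (edist_le_ediam_of_mem hx hz).trans_lt (hc k).1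
      rwa [← ENNReal.coe_toNNReal (hc k).2.ne, edist_lt_coe, ← NNReal.coe_lt_coe,
        coe_nndist] at hxz
  choose z hz using hball
  refine ⟨z, fun k ↦ (c k).toNNReal, fun k ↦ ENNReal.toNNReal_pos (hc k).1.ne_bot (hc k).2.ne,
    hcover.trans (iUnion_mono hz), ?_⟩
  have hdiamD (k : ℕ) : ediam (t k) ^ D = ⨆ _ : (t k).Nonempty, ediam (t k) ^ D := by
    rcases (t k).eq_empty_or_nonempty with hempty | hne
    · simp [hempty, hD]
    · simp [hne]
  calc ∑' k, ((c k).toNNReal : ℝ≥0∞) ^ D ≤ ∑' k, (ediam (t k) ^ D + η' k) :=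
        ENNReal.tsum_le_tsum fun k ↦ by simpa only [ENNReal.coe_toNNReal (hc k).2.ne] using hcD k
    _ ≤ η / 2 + η / 2 := by
        rw [ENNReal.tsum_add, tsum_congr hdiamD]
        exact add_le_add hsum.le hη'.le
    _ = η := ENNReal.add_halves η

/-- A mass distribution principle in which small balls only need to be light for all but finitely
many of the measures. -/
theorem hausdorffMeasure_ne_zero_of_eventually_measure_closedBall_le (hF : IsCompact F)
    (hD : 0 < D) {μ : ℕ → Measure X} (hμF : ∀ n, 1 ≤ μ n F) {C : ℝ≥0∞} (hC : C ≠ ⊤)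
    (hμ : ∀ ρ : ℝ≥0, 0 < ρ → ρ ≤ 1 →
      ∀ᶠ n in atTop, ∀ z, μ n (closedBall z ρ) ≤ C * (ρ : ℝ≥0∞) ^ D) :
    μH[D] F ≠ 0 := by
  intro hzero
  obtain ⟨x, -⟩ := nonempty_of_measure_ne_zero (zero_lt_one.trans_le (hμF 0)).ne'
  have : Nonempty X := ⟨x⟩
  have hη : (C + 1)⁻¹ ≠ 0 := by simpa using hC
  obtain ⟨z, ρ, hρ_pos, hcover, hsum⟩ :=
    exists_ball_cover_of_hausdorffMeasure_eq_zero hD hzero hη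
  have hρ_le (k : ℕ) : ρ k ≤ 1 := by
    have hpow : (ρ k : ℝ≥0∞) ^ D ≤ 1 :=
      (ENNReal.le_tsum k).trans (hsum.trans (ENNReal.inv_le_one.2 le_add_self))
    exact mod_cast (ENNReal.rpow_le_rpow_iff hD).1 (hpow.trans_eq (ENNReal.one_rpow D).symm)
  obtain ⟨I, hI⟩ := hF.elim_finite_subcover (fun k ↦ ball (z k) (ρ k)) (fun _ ↦ isOpen_ball) hcover
  obtain ⟨n, hn⟩ := ((Filter.eventually_all_finset I).2 fun k _ ↦
    hμ (ρ k) (hρ_pos k) (hρ_le k)).exists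
  have hlt : C * (C + 1)⁻¹ < 1 := by
    rw [← div_eq_mul_inv]
    exact ENNReal.div_lt_of_lt_mul' (by simpa using ENNReal.lt_add_right hC one_ne_zero)
  refine hlt.not_ge ?_
  calc 1 ≤ μ n F := hμF n
    _ ≤ ∑ k ∈ I, μ n (closedBall (z k) (ρ k)) :=
        (measure_mono (hI.trans (iUnion₂_mono fun k _ ↦ ball_subset_closedBall))).trans
          (measure_biUnion_finset_le I _)
    _ ≤ ∑ k ∈ I, C * (ρ k : ℝ≥0∞) ^ D := Finset.sum_le_sum fun k hk ↦ hn k hk (z k)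
    _ ≤ C * (C + 1)⁻¹ := by
        rw [← Finset.mul_sum]
        exact mul_le_mul_right ((ENNReal.sum_le_tsum I).trans hsum) C

end MassDistribution

/-- The open set `U` witnesses the open set condition for the maps `S i`. -/
structure OpenSetCondition {ι X : Type*} [PseudoMetricSpace X] (S : ι → X → X) (U : Set X) :
    Prop where
  isOpen : IsOpen U
  nonempty : U.Nonempty
  isBounded : Bornology.IsBounded U
  mapsTo : ∀ i, MapsTo (S i) U U
  disjoint : Pairwise fun i j ↦ Disjoint (S i '' U) (S j '' U)

theorem openSetCondition_interior {ι X : Type*} [PseudoMetricSpace X] {S : ι → X → X} {J : Set X}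
    (hS : ∀ i, IsOpenMap (S i)) (hJ : Bornology.IsBounded J) (hJ_ne : (interior J).Nonempty)
    (hmaps : ∀ i, S i '' J ⊆ J)
    (hdisj : Pairwise fun i j ↦ Disjoint (S i '' interior J) (S j '' interior J)) :
    OpenSetCondition S (interior J) where
  isOpen := isOpen_interior
  nonempty := hJ_ne
  isBounded := hJ.subset interior_subset
  mapsTo i := mapsTo_iff_image_subset.2 <| interior_maximal
    ((image_mono interior_subset).trans (hmaps i)) (hS i _ isOpen_interior)
  disjoint := hdisj

theorem exists_measure_closedBall_le_of_one_le {X : Type*} [PseudoMetricSpace X]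
    [MeasurableSpace X] {𝓛 : Measure X} {U F : Set X} (hU_pos : 𝓛 U ≠ 0) (hU_top : 𝓛 U ≠ ⊤)
    (hU : Bornology.IsBounded U) (hF : Bornology.IsBounded F) (t : ℝ) (b : ℝ≥0) :
    ∃ κ : ℝ≥0, ∃ M : ℝ≥0∞, M ≠ ⊤ ∧ ∀ μ : Measure X, μ univ ≤ 1 → (∀ᵐ x ∂μ, x ∈ F) →
      ∀ (z : X) (ρ : ℝ≥0), 1 ≤ ρ → ρ ≤ b →
        μ (closedBall z ρ) ≤ M * ((ρ ^ t : ℝ≥0) * 𝓛 (U ∩ closedBall z (κ * ρ))) := by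
  obtain ⟨R, hR⟩ := Metric.isBounded_iff.1 (hF.union hU)
  refine ⟨1 + R.toNNReal, (b ^ |t| : ℝ≥0) * (𝓛 U)⁻¹, by finiteness, fun μ hμ hμF z ρ hρ hρb ↦ ?_⟩
  by_cases hdisj : (F ∩ closedBall z ρ).Nonempty
  · obtain ⟨x, hxF, hxz⟩ := hdisj
    have hsub : U ∩ closedBall z ((1 + R.toNNReal : ℝ≥0) * ρ) = U := by
      refine inter_eq_left.2 fun u hu ↦ ?_
      calc dist u z ≤ dist u x + dist x z := dist_triangle u x z
        _ ≤ R.toNNReal * ρ + ρ := by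
            refine add_le_add ((hR (.inr hu) (.inl hxF)).trans ?_) hxz
            exact (Real.le_coe_toNNReal R).trans (le_mul_of_one_le_right R.toNNReal.coe_nonneg hρ)
        _ = _ := by
            push_cast
            ring
    have hpow : 1 ≤ b ^ |t| * ρ ^ t := by
      calc 1 ≤ ρ ^ (|t| + t) := NNReal.one_le_rpow hρ (by linarith [neg_abs_le t])
        _ = ρ ^ |t| * ρ ^ t := NNReal.rpow_add (by positivity) _ _
        _ ≤ b ^ |t| * ρ ^ t := by gcongr
    calc μ (closedBall z ρ) ≤ 1 := (measure_mono (subset_univ _)).trans hμ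
      _ ≤ (b ^ |t| * ρ ^ t : ℝ≥0) * ((𝓛 U)⁻¹ * 𝓛 U) := by
          rw [ENNReal.inv_mul_cancel hU_pos hU_top, mul_one]
          exact mod_cast hpow
      _ = _ := by
          rw [hsub, ENNReal.coe_mul]
          ring
  · have hnull : μ (closedBall z ρ) = 0 :=
      measure_mono_null (fun x hx hxF ↦ hdisj ⟨x, hxF, hx⟩) hμF
    rw [hnull]
    exact zero_le

namespace IsSimilarityIFS

variable {ι E : Type*} [Fintype ι] [NormedAddCommGroup E] [NormedSpace ℝ E]
  [StrictConvexSpace ℝ E] [FiniteDimensional ℝ E] [MeasurableSpace E] [BorelSpace E]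
  {S : ι → E → E} {r : ι → ℝ≥0} {U F : Set E} {D : ℝ}

theorem sum_rpow_mul_hausdorffMeasure_inter_preimage_le (hS : IsSimilarityIFS S r)
    (hU : OpenSetCondition S U) {s : ℝ} (hs : 0 ≤ s) {B : Set E} (hB : MeasurableSet B) :
    ∑ i, (r i : ℝ≥0∞) ^ s * μH[s] (U ∩ S i ⁻¹' B) ≤ μH[s] (U ∩ B) := by
  simp_rw [← (hS.isSimilarity _).hausdorffMeasure_image (hS.ratio_pos _) hs, image_inter_preimage]
  have hmeas (i : ι) : MeasurableSet (S i '' U ∩ B) :=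
    ((hS.isSimilarity i).isOpenMap (hS.ratio_pos i) U hU.isOpen).measurableSet.inter hB
  have hunion := measure_iUnion (μ := μH[s])
    (fun i j hij ↦ (hU.disjoint hij).mono inter_subset_left inter_subset_left) hmeas
  rw [tsum_fintype] at hunion
  rw [← hunion]
  exact measure_mono (iUnion_subset fun i ↦ inter_subset_inter_left B (hU.mapsTo i).image_subset)

/-- The right-hand side is a supersolution of the recursion satisfied by the left-hand side,
because the images `S i '' U` are disjoint. -/
theorem iterate_hutchinson_closedBall_le (hS : IsSimilarityIFS S r) (hU : OpenSetCondition S U)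
    {p q κ : ℝ≥0} (hp : ∀ i, p ≤ r i) (hp_pos : 0 < p) (hq : ∀ i, r i ≤ q) {s : ℝ} (hs : 0 ≤ s)
    {μ : Measure E} {M : ℝ≥0∞}
    (hM : ∀ (n : ℕ) (z : E) (ρ : ℝ≥0), 1 ≤ ρ → ρ ≤ p⁻¹ →
      (hutchinson S fun i ↦ r i ^ D)^[n] μ (closedBall z ρ) ≤
        M * ((ρ ^ (D - s) : ℝ≥0) * μH[s] (U ∩ closedBall z (κ * ρ))))
    (n : ℕ) (z : E) (ρ : ℝ≥0) (hρ_ge : q ^ n ≤ ρ) (hρ_le : ρ ≤ p⁻¹) :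
    (hutchinson S fun i ↦ r i ^ D)^[n] μ (closedBall z ρ) ≤
      M * ((ρ ^ (D - s) : ℝ≥0) * μH[s] (U ∩ closedBall z (κ * ρ))) := by
  induction n generalizing z ρ with
  | zero => exact hM 0 z ρ (by simpa using hρ_ge) hρ_le
  | succ n ih =>
    rcases le_or_gt 1 ρ with hρ | hρ
    · exact hM (n + 1) z ρ hρ hρ_le
    choose z' hz' using fun i ↦ (hS.isSimilarity i).surjective (hS.ratio_pos i) z
    have hpre (i : ι) (t : ℝ) : S i ⁻¹' closedBall z t = closedBall (z' i) (t / r i) := by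
      rw [← hz' i, (hS.isSimilarity i).preimage_closedBall (hS.ratio_pos i)]
    have hge (i : ι) : q ^ n ≤ ρ / r i := by
      rw [le_div_iff₀ (hS.ratio_pos i)]
      exact (mul_le_mul_right (hq i) _).trans hρ_ge
    have hle (i : ι) : ρ / r i ≤ p⁻¹ := by
      rw [div_eq_mul_inv]
      exact mul_le_of_le_one_of_le hρ.le (inv_anti₀ hp_pos (hp i))
    rw [Function.iterate_succ_apply', hutchinson.apply hS.measurable measurableSet_closedBall]
    calc ∑ i, (r i ^ D : ℝ≥0) * (hutchinson S fun i ↦ r i ^ D)^[n] μ (S i ⁻¹' closedBall z ρ)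
        ≤ ∑ i, (r i ^ D : ℝ≥0) * (M * (((ρ / r i) ^ (D - s) : ℝ≥0) *
            μH[s] (U ∩ S i ⁻¹' closedBall z (κ * ρ)))) := by
          refine Finset.sum_le_sum fun i _ ↦ mul_le_mul_right ?_ _
          simpa only [hpre, mul_div_assoc, NNReal.coe_div] using ih (z' i) _ (hge i) (hle i)
      _ = M * ((ρ ^ (D - s) : ℝ≥0) *
            ∑ i, (r i : ℝ≥0∞) ^ s * μH[s] (U ∩ S i ⁻¹' closedBall z (κ * ρ))) := by
          simp_rw [Finset.mul_sum]
          refine Finset.sum_congr rfl fun i _ ↦ ?_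
          have hscale : r i ^ D * (ρ / r i) ^ (D - s) = ρ ^ (D - s) * r i ^ s := by
            rw [NNReal.div_rpow, mul_div_left_comm, ← NNReal.rpow_sub (hS.ratio_pos i).ne',
              sub_sub_cancel]
          rw [mul_left_comm, ← mul_assoc (_ : ℝ≥0∞) (_ : ℝ≥0∞) (μH[s] _), ← ENNReal.coe_mul, hscale,
            ENNReal.coe_mul, ENNReal.coe_rpow_of_nonneg _ hs, mul_assoc (_ : ℝ≥0∞) (_ ^ s)]
      _ ≤ _ := by
          gcongr
          exact hS.sum_rpow_mul_hausdorffMeasure_inter_preimage_le hU hs measurableSet_closedBall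

theorem exists_iterate_hutchinson_closedBall_le (hS : IsSimilarityIFS S r)
    (hU : OpenSetCondition S U) (hF : Bornology.IsBounded F) {μ : Measure E}
    (hμ : ∀ n, (hutchinson S fun i ↦ r i ^ D)^[n] μ univ = 1)
    (hμF : ∀ n, ∀ᵐ x ∂(hutchinson S fun i ↦ r i ^ D)^[n] μ, x ∈ F) {q : ℝ≥0} (hq : ∀ i, r i ≤ q) :
    ∃ C : ℝ≥0∞, C ≠ ⊤ ∧ ∀ (n : ℕ) (z : E) (ρ : ℝ≥0), 0 < ρ → q ^ n ≤ ρ → ρ ≤ 1 →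
      (hutchinson S fun i ↦ r i ^ D)^[n] μ (closedBall z ρ) ≤ C * (ρ : ℝ≥0∞) ^ D := by
  obtain ⟨p, hp_pos, hp_le, hp⟩ := hS.exists_pos_le_ratio
  set 𝓛 : Measure E := μH[Module.finrank ℝ E]
  obtain ⟨κ, M, hM_top, hM⟩ := exists_measure_closedBall_le_of_one_le
    (hU.isOpen.measure_pos 𝓛 hU.nonempty).ne' hU.isBounded.measure_lt_top.ne hU.isBounded hF
    (D - Module.finrank ℝ E) p⁻¹
  refine ⟨M * (κ ^ Module.finrank ℝ E * 𝓛 (ball 0 1)), ?_, fun n z ρ hρ hρ_ge hρ_le ↦ ?_⟩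
  · have := (isBounded_ball (x := (0 : E)) (r := 1)).measure_lt_top (μ := 𝓛)
    finiteness
  calc _ ≤ M * ((ρ ^ (D - Module.finrank ℝ E) : ℝ≥0) * 𝓛 (U ∩ closedBall z (κ * ρ))) :=
        hS.iterate_hutchinson_closedBall_le hU hp hp_pos hq (Nat.cast_nonneg _)
          (fun n ↦ hM _ (hμ n).le (hμF n)) n z ρ hρ_ge
          (hρ_le.trans (one_le_inv₀ hp_pos |>.2 hp_le))
    _ ≤ M * ((ρ ^ (D - Module.finrank ℝ E) : ℝ≥0) * 𝓛 (closedBall z (κ * ρ))) := by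
        gcongr
        exact inter_subset_right
    _ = M * (κ ^ Module.finrank ℝ E * 𝓛 (ball 0 1)) * (ρ : ℝ≥0∞) ^ D := by
        rw [Measure.addHaar_closedBall 𝓛 z (by positivity)]
        have hrpow : ρ ^ (D - Module.finrank ℝ E) * ρ ^ Module.finrank ℝ E = ρ ^ D := by
          rw [← NNReal.rpow_natCast, ← NNReal.rpow_add hρ.ne', sub_add_cancel]
        rw [← ENNReal.coe_rpow_of_ne_zero hρ.ne', ← hrpow, ← NNReal.coe_mul, ← NNReal.coe_pow,
          ENNReal.ofReal_coe_nnreal, mul_pow]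
        push_cast
        ring

theorem hausdorffMeasure_ne_zero (hS : IsSimilarityIFS S r) (hF : IsAttractor S F)
    (hU : OpenSetCondition S U) (hD : 0 < D) (hr : ∑ i, r i ^ D = 1) : μH[D] F ≠ 0 := by
  obtain ⟨q, hq_lt, hq⟩ := hS.exists_ratio_le_lt_one
  obtain ⟨y, hy⟩ := hF.nonempty
  have hF_meas : MeasurableSet F := hF.isCompact.measurableSet
  set μ : ℕ → Measure E := fun n ↦ (hutchinson S fun i ↦ r i ^ D)^[n] (Measure.dirac y)
  have hμ_univ (n : ℕ) : μ n univ = 1 := by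
    simp only [μ, hutchinson.iterate_apply_univ hS.measurable hr, measure_univ]
  have hμF (n : ℕ) : ∀ᵐ x ∂μ n, x ∈ F :=
    hutchinson.ae_mem_iterate hS.measurable hF_meas hF.mapsTo ((ae_dirac_iff hF_meas).2 hy) n
  obtain ⟨C, hC, hball⟩ :=
    hS.exists_iterate_hutchinson_closedBall_le hU hF.isCompact.isBounded hμ_univ hμF hq
  refine hausdorffMeasure_ne_zero_of_eventually_measure_closedBall_le hF.isCompact hD (μ := μ)
    (fun n ↦ ?_) hC fun ρ hρ_pos hρ_le ↦ ?_
  · rw [← hμ_univ n]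
    exact measure_mono_ae ((hμF n).mono fun _ hx _ ↦ hx)
  · filter_upwards [(NNReal.tendsto_pow_atTop_nhds_zero_of_lt_one hq_lt).eventually_le_const hρ_pos]
      with n hn z using hball n z ρ hρ_pos hn hρ_le

end IsSimilarityIFS

end Positivity

section Measurability

theorem exists_isOpen_superset_iSup_ediam_rpow_le {X : Type*} [PseudoMetricSpace X] {s : ℝ}
    (hs : 0 ≤ s) (t : Set X) {b η : ℝ≥0∞} (hb : ediam t < b) (hη : η ≠ 0) :
    ∃ u, IsOpen u ∧ t ⊆ u ∧ ediam u ≤ b ∧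
      ⨆ _ : u.Nonempty, ediam u ^ s ≤ (⨆ _ : t.Nonempty, ediam t ^ s) + η := by
  rcases t.eq_empty_or_nonempty with rfl | ht
  · exact ⟨∅, isOpen_empty, Subset.rfl, by simp, by simp⟩
  obtain ⟨c, ⟨htc, hcb⟩, hc⟩ := exists_mem_Ioo_rpow_le_add hb hs hη
  obtain ⟨δ, hδ_pos, hδ⟩ := ENNReal.lt_iff_exists_add_pos_lt.1 htc
  have hdiam : ediam (thickening (δ / 2 : ℝ≥0) t) ≤ c := by
    refine (ediam_thickening_le (δ / 2)).trans ((le_of_eq ?_).trans hδ.le)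
    rw [← ENNReal.coe_ofNat, ← ENNReal.coe_mul, mul_div_cancel₀ δ two_ne_zero]
  refine ⟨thickening (δ / 2 : ℝ≥0) t, isOpen_thickening,
    self_subset_thickening (NNReal.coe_pos.2 (half_pos hδ_pos)) t, hdiam.trans hcb.le, ?_⟩
  rw [iSup_pos ht]
  exact iSup_le fun _ ↦ (ENNReal.rpow_le_rpow hdiam hs).trans hc

theorem isOpen_setOf_inter_preimage_singleton_subset {X Y : Type*} [TopologicalSpace X]
    [TopologicalSpace Y] {g : X → Y} (hg : IsClosedMap g) {C O : Set X} (hC : IsClosed C)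
    (hO : IsOpen O) : IsOpen {y | C ∩ g ⁻¹' {y} ⊆ O} := by
  have heq : {y | C ∩ g ⁻¹' {y} ⊆ O} = (g '' (C \ O))ᶜ := by
    ext y
    simp only [mem_ofPred_eq, mem_compl_iff, mem_image, not_exists, not_and, subset_def,
      mem_inter_iff, mem_preimage, mem_singleton_iff, Set.mem_sdiff]
    grind
  rw [heq]
  exact (hg _ (hC.sdiff hO)).isOpen_compl

variable {X : Type*} [MetricSpace X] [MeasurableSpace X] [BorelSpace X] {s : ℝ}

theorem hausdorffMeasure_eq_iSup_iInf_isOpen (hs : 0 ≤ s) (A : Set X) :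
    μH[s] A = ⨆ n : ℕ, ⨅ (t : ℕ → Set X) (_ : ∀ k, IsOpen (t k)) (_ : A ⊆ ⋃ k, t k)
      (_ : ∀ k, ediam (t k) ≤ ((n : ℝ≥0∞) + 1)⁻¹),
      ∑' k, ⨆ _ : (t k).Nonempty, ediam (t k) ^ s := by
  rw [Measure.hausdorffMeasure_apply]
  refine le_antisymm (iSup₂_le fun b hb ↦ ?_) (iSup_le fun n ↦ ?_)
  · obtain ⟨n, hn⟩ := ENNReal.exists_inv_nat_lt hb.ne'
    have hnb : ((n : ℝ≥0∞) + 1)⁻¹ ≤ b := (ENNReal.inv_le_inv.2 le_self_add).trans hn.le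
    exact le_iSup_of_le n <| le_iInf₂ fun t _ ↦ le_iInf₂ fun hcover hdiam ↦
      iInf₂_le_of_le t hcover <| iInf_le _ fun k ↦ (hdiam k).trans hnb
  · have hpos : (0 : ℝ≥0∞) < ((n : ℝ≥0∞) + 1)⁻¹ := by simp
    obtain ⟨b, hb_pos, hbn⟩ := exists_between hpos
    refine le_iSup₂_of_le b hb_pos <| le_iInf₂ fun t hcover ↦ le_iInf fun hdiam ↦
      ENNReal.le_of_forall_pos_le_add fun η hη _ ↦ ?_
    obtain ⟨η', hη'_pos, hη'⟩ :=
      ENNReal.exists_pos_sum_of_countable' (ENNReal.coe_ne_zero.2 hη.ne') ℕ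
    choose u hu_open htu hu_diam hu using fun k ↦ exists_isOpen_superset_iSup_ediam_rpow_le hs
      (t k) ((hdiam k).trans_lt hbn) (hη'_pos k).ne'
    refine iInf₂_le_of_le u hu_open <|
      iInf₂_le_of_le (hcover.trans (iUnion_mono htu)) hu_diam ?_
    calc ∑' k, ⨆ _ : (u k).Nonempty, ediam (u k) ^ s
        ≤ ∑' k, ((⨆ _ : (t k).Nonempty, ediam (t k) ^ s) + η' k) := ENNReal.tsum_le_tsum hu
      _ ≤ (∑' k, ⨆ _ : (t k).Nonempty, ediam (t k) ^ s) + η := by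
          rw [ENNReal.tsum_add]
          exact add_le_add_right hη'.le _

theorem measurable_hausdorffMeasure_inter_preimage_singleton {Y : Type*} [TopologicalSpace Y]
    [MeasurableSpace Y] [OpensMeasurableSpace Y] {g : X → Y} (hg : IsClosedMap g) (hs : 0 ≤ s)
    {C : Set X} (hC : IsClosed C) :
    Measurable fun y ↦ μH[s] (C ∩ g ⁻¹' {y}) := by
  simp_rw [hausdorffMeasure_eq_iSup_iInf_isOpen hs]
  refine Measurable.iSup fun n ↦ measurable_of_Iio fun c ↦ IsOpen.measurableSet ?_
  rw [isOpen_iff_mem_nhds]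
  intro y hy
  simp only [mem_preimage, mem_Iio, iInf_lt_iff] at hy
  obtain ⟨t, ht_open, hcover, hdiam, hsum⟩ := hy
  filter_upwards [(isOpen_setOf_inter_preimage_singleton_subset hg hC
    (isOpen_iUnion ht_open)).mem_nhds hcover] with z hz
  exact (iInf₂_le_of_le t ht_open <| iInf₂_le hz hdiam).trans_lt hsum

end Measurability

section DistanceLevel

/-- The level set of the distance to `F`. For almost every `ε > 0` it is the boundary of the closed
`ε`-parallel set of `F`, and unlike that boundary it behaves well under the maps of an iterated
function system for every `ε`. -/
def distLevel {X : Type*} [PseudoMetricSpace X] (F : Set X) (ε : ℝ) : Set X :=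
  (infDist · F) ⁻¹' {ε}

namespace distLevel

section Metric

variable {X : Type*} [PseudoMetricSpace X] {F : Set X} {ε : ℝ}

theorem isClosed : IsClosed (distLevel F ε) :=
  isClosed_singleton.preimage (continuous_infDist_pt F)

theorem subset_cthickening (hF : F.Nonempty) {b : ℝ} (hεb : ε ≤ b) :
    distLevel F ε ⊆ cthickening b F := by
  rintro x rfl
  exact (ENNReal.le_ofReal_iff_toReal_le (infEDist_ne_top hF) (infDist_nonneg.trans hεb)).2 hεb

/-- If `x` in the level set is interior to the parallel set, then `ε` is the maximum of the
distance on a neighborhood of `x`; a countable base yields only countably many such maxima. -/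
theorem ae_frontier_cthickening_eq [SecondCountableTopology X] (hF : F.Nonempty) :
    ∀ᵐ ε : ℝ, 0 < ε → frontier (cthickening ε F) = distLevel F ε := by
  have hcount : (⋃ B ∈ TopologicalSpace.countableBasis X,
      {ε : ℝ | IsGreatest ((infDist · F) '' B) ε}).Countable :=
    (TopologicalSpace.countable_countableBasis X).biUnion fun B _ ↦
      Subsingleton.countable fun _ ha _ hb ↦ ha.unique hb
  filter_upwards [hcount.ae_notMem volume] with ε hε hpos
  have hmem (y : X) : y ∈ cthickening ε F ↔ infDist y F ≤ ε :=
    ENNReal.le_ofReal_iff_toReal_le (infEDist_ne_top hF) hpos.le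
  refine Subset.antisymm (fun x hx ↦ ?_) fun x hx ↦ ?_
  · have hx' : infEDist x F = ENNReal.ofReal ε := frontier_cthickening_subset F hx
    exact (congrArg ENNReal.toReal hx').trans (ENNReal.toReal_ofReal hpos.le)
  · rw [isClosed_cthickening.frontier_eq]
    refine ⟨(hmem x).2 hx.le, fun hint ↦ hε ?_⟩
    obtain ⟨B, hB, hxB, hBF⟩ := (TopologicalSpace.isBasis_countableBasis
      X).exists_subset_of_mem_open hint isOpen_interior
    exact mem_iUnion₂.2 ⟨B, hB, ⟨x, hxB, hx⟩,
      forall_mem_image.2 fun y hy ↦ (hmem y).1 (interior_subset (hBF hy))⟩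

end Metric

theorem isClosedMap_infDist {X : Type*} [PseudoMetricSpace X] [ProperSpace X] {F : Set X}
    (hF : F.Nonempty) (hF_bdd : Bornology.IsBounded F) : IsClosedMap (infDist · F) := by
  obtain ⟨a, ha⟩ := hF
  refine (isProperMap_iff_tendsto_cocompact.2 ⟨continuous_infDist_pt F, ?_⟩).isClosedMap
  refine Tendsto.mono_right ?_ (_root_.atTop_le_cocompact (α := ℝ))
  rw [← cobounded_eq_cocompact]
  refine tendsto_atTop_mono (fun x ↦ ?_)
    (tendsto_atTop_add_const_right _ (-diam F) (tendsto_dist_right_cobounded_atTop a))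
  linarith [dist_le_infDist_add_diam (x := x) hF_bdd ha]

end distLevel

theorem IsSimilarityIFS.distLevel_subset_iUnion_image {ι E : Type*} [NormedAddCommGroup E]
    [NormedSpace ℝ E] [StrictConvexSpace ℝ E] [FiniteDimensional ℝ E] {S : ι → E → E}
    {r : ι → ℝ≥0} {F : Set E} (hS : IsSimilarityIFS S r) (hF : IsAttractor S F) (ε : ℝ) :
    distLevel F ε ⊆ ⋃ i, S i '' distLevel F (ε / r i) := by
  rintro x rfl
  obtain ⟨a, ha, hxa⟩ := hF.isCompact.exists_infDist_eq_dist hF.nonempty x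
  rw [hF.eq_iUnion] at ha
  obtain ⟨i, b, hb, rfl⟩ := mem_iUnion.1 ha
  obtain ⟨y, rfl⟩ := (hS.isSimilarity i).surjective (hS.ratio_pos i) x
  have heq : infDist (S i y) F = infDist (S i y) (S i '' F) :=
    (infDist_le_infDist_of_subset (hF.mapsTo i).image_subset (hF.nonempty.image _)).antisymm
      ((infDist_le_dist_of_mem (mem_image_of_mem _ hb)).trans_eq hxa.symm)
  refine mem_iUnion.2 ⟨i, y, ?_, rfl⟩
  rw [(hS.isSimilarity i).infDist_image hF.nonempty] at heq
  exact eq_div_of_mul_eq (NNReal.coe_ne_zero.2 (hS.ratio_pos i).ne') ((mul_comm _ _).trans heq.symm)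

end DistanceLevel

section LargeDistance

open Module Submodule

theorem hausdorffMeasure_le_mul_image_of_dist_le {X Y : Type*} [MetricSpace X] [MeasurableSpace X]
    [BorelSpace X] [MetricSpace Y] [MeasurableSpace Y] [BorelSpace Y] {f : X → Y} {A : Set X}
    {K : ℝ≥0} (hf : ∀ x ∈ A, ∀ y ∈ A, dist x y ≤ K * dist (f x) (f y)) {s : ℝ} (hs : 0 ≤ s) :
    μH[s] A ≤ (K : ℝ≥0∞) ^ s * μH[s] (f '' A) := by
  have hanti : AntilipschitzWith K (A.domRestrict f) :=
    AntilipschitzWith.of_le_mul_dist fun x y ↦ hf x x.2 y y.2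
  have hA := isometry_subtype_coe.hausdorffMeasure_image (.inl hs) (univ : Set A)
  rw [image_univ, Subtype.range_coe] at hA
  rw [hA, ← range_domRestrict, ← image_univ]
  exact hanti.le_hausdorffMeasure_image hs univ

theorem distLevel.abs_norm_sub_le {E : Type*} [SeminormedAddCommGroup E] {F : Set E} {R ε : ℝ}
    (hF : IsCompact F) (hF_ne : F.Nonempty) (hR : F ⊆ closedBall 0 R) {x : E}
    (hx : x ∈ distLevel F ε) : |‖x‖ - ε| ≤ R := by
  obtain ⟨a, ha, hxa⟩ := hF.exists_infDist_eq_dist hF_ne x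
  rw [← show infDist x F = ε from hx, hxa, dist_eq_norm]
  calc |‖x‖ - ‖x - a‖| ≤ ‖x - (x - a)‖ := abs_norm_sub_norm_le _ _
    _ ≤ R := by simpa using hR ha

variable {E : Type*} [NormedAddCommGroup E] [InnerProductSpace ℝ E] {F : Set E} {R ε : ℝ}

theorem norm_sq_eq_inner_sq_add_norm_orthogonalProjectionOnto_sq {e : E} (he : ‖e‖ = 1) (x : E) :
    ‖x‖ ^ 2 = inner ℝ e x ^ 2 + ‖(ℝ ∙ e)ᗮ.orthogonalProjectionOnto x‖ ^ 2 := by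
  rw [norm_sq_eq_add_norm_sq_starProjection x (ℝ ∙ e), starProjection_unit_singleton ℝ he,
    norm_smul, he, mul_one, Real.norm_eq_abs, sq_abs]
  rfl

namespace distLevel

theorem norm_sq_sub_norm_sq_le (hF : IsCompact F) (hF_ne : F.Nonempty)
    (hR : F ⊆ closedBall 0 R) {x y : E} (hx : x ∈ distLevel F ε) (hy : y ∈ distLevel F ε) :
    ‖x‖ ^ 2 - ‖y‖ ^ 2 ≤ 2 * R * ‖x - y‖ := by
  obtain ⟨a, ha, hxa⟩ := hF.exists_infDist_eq_dist hF_ne x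
  have haR : ‖a‖ ≤ R := mem_closedBall_zero_iff.1 (hR ha)
  have hdist : ‖x - a‖ ^ 2 ≤ ‖y - a‖ ^ 2 := by
    rw [← dist_eq_norm, ← dist_eq_norm, ← hxa, show infDist x F = infDist y F from hx.trans hy.symm]
    gcongr
    exacts [infDist_nonneg, infDist_le_dist_of_mem ha]
  have hinner : inner ℝ x a - inner ℝ y a ≤ R * ‖x - y‖ :=
    calc inner ℝ x a - inner ℝ y a = inner ℝ (x - y) a := (inner_sub_left x y a).symm
      _ ≤ ‖x - y‖ * ‖a‖ := real_inner_le_norm _ _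
      _ ≤ R * ‖x - y‖ := by rw [mul_comm]; gcongr
  rw [norm_sub_sq_real, norm_sub_sq_real] at hdist
  linarith

/-- Far away from `F`, the level set inside a cone around `e` is a Lipschitz graph over `eᗮ`. -/
theorem norm_sub_le_four_mul_norm_orthogonalProjection (hF : IsCompact F) (hF_ne : F.Nonempty)
    (hR : F ⊆ closedBall 0 R) (hε : 0 < ε) (hRε : 9 * R ≤ ε) {e x y : E} (he : ‖e‖ = 1)
    (hx : x ∈ distLevel F ε) (hy : y ∈ distLevel F ε) (hxe : ‖x‖ ≤ 2 * inner ℝ e x)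
    (hye : ‖y‖ ≤ 2 * inner ℝ e y) :
    ‖x - y‖ ≤ 4 * ‖(ℝ ∙ e)ᗮ.orthogonalProjectionOnto x - (ℝ ∙ e)ᗮ.orthogonalProjectionOnto y‖ := by
  set P := (ℝ ∙ e)ᗮ.orthogonalProjectionOnto
  have hpyth := norm_sq_eq_inner_sq_add_norm_orthogonalProjectionOnto_sq he
  have hnorm_x := (abs_le.1 (abs_norm_sub_le hF hF_ne hR hx)).1
  have hnorm_y := (abs_le.1 (abs_norm_sub_le hF hF_ne hR hy)).1
  have hproj : |‖P x‖ ^ 2 - ‖P y‖ ^ 2| ≤ (‖x‖ + ‖y‖) * ‖P x - P y‖ := by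
    rw [sq_sub_sq, abs_mul, abs_of_nonneg (by positivity)]
    gcongr
    exacts [norm_orthogonalProjectionOnto_apply_le _ _,
      norm_orthogonalProjectionOnto_apply_le _ _, abs_norm_sub_norm_le _ _]
  have hinner : |inner ℝ e x - inner ℝ e y| ≤ ‖x - y‖ / 4 + 2 * ‖P x - P y‖ := by
    have hsq : |inner ℝ e x ^ 2 - inner ℝ e y ^ 2| ≤
        2 * R * ‖x - y‖ + (‖x‖ + ‖y‖) * ‖P x - P y‖ := by
      have hxy := norm_sq_sub_norm_sq_le hF hF_ne hR hx hy
      have hyx := norm_sq_sub_norm_sq_le hF hF_ne hR hy hx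
      rw [norm_sub_rev] at hyx
      rw [hpyth, hpyth] at hxy hyx
      rw [abs_le] at hproj ⊢
      constructor <;> linarith
    rw [sq_sub_sq, abs_mul, abs_of_nonneg (by linarith [norm_nonneg x, norm_nonneg y])] at hsq
    have := abs_nonneg (inner ℝ e x - inner ℝ e y)
    have := norm_nonneg (x - y)
    refine le_of_mul_le_mul_left ?_ (by linarith : 0 < (‖x‖ + ‖y‖) / 2)
    nlinarith
  have htri : ‖x - y‖ ≤ |inner ℝ e x - inner ℝ e y| + ‖P x - P y‖ := by
    refine (sq_le_sq₀ (norm_nonneg _) (by positivity)).1 ?_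
    rw [hpyth (x - y), inner_sub_right, map_sub, ← sq_abs (inner ℝ e x - _)]
    have := norm_nonneg (P x - P y)
    nlinarith [abs_nonneg (inner ℝ e x - inner ℝ e y)]
  linarith

end distLevel

variable [FiniteDimensional ℝ E]

theorem cast_finrank_orthogonal_span_singleton {e : E} (he : e ≠ 0) :
    (finrank ℝ (ℝ ∙ e)ᗮ : ℝ) = finrank ℝ E - 1 := by
  rw [← (ℝ ∙ e).finrank_add_finrank_orthogonal, finrank_span_singleton he]
  simp

theorem exists_finset_forall_exists_norm_le_two_mul_inner :
    ∃ I : Finset E, (∀ e ∈ I, ‖e‖ = 1) ∧ ∀ x : E, x ≠ 0 → ∃ e ∈ I, ‖x‖ ≤ 2 * inner ℝ e x := by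
  have := FiniteDimensional.proper_real E
  obtain ⟨I, hI_sphere, hI⟩ := (isCompact_sphere (0 : E) 1).elim_nhds_subcover
    (fun e ↦ {x | 1 < 2 * inner ℝ e x}) fun e he ↦ by
      refine (isOpen_lt (by fun_prop) (by fun_prop)).mem_nhds ?_
      simp [mem_sphere_zero_iff_norm.1 he]
  refine ⟨I, fun e he ↦ mem_sphere_zero_iff_norm.1 (hI_sphere e he), fun x hx ↦ ?_⟩
  have hx_pos := norm_pos_iff.2 hx
  obtain ⟨e, heI, he⟩ := mem_iUnion₂.1
    (hI (mem_sphere_zero_iff_norm.2 (norm_smul_inv_norm (𝕜 := ℝ) hx)))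
  refine ⟨e, heI, ?_⟩
  have he' : 1 < 2 * (‖x‖⁻¹ * inner ℝ e x) := by simpa [inner_smul_right] using he
  have := mul_lt_mul_of_pos_left he' hx_pos
  field_simp at this
  linarith

variable [MeasurableSpace E] [BorelSpace E]

namespace distLevel

theorem hausdorffMeasure_inter_cone_le (hF : IsCompact F) (hF_ne : F.Nonempty)
    (hR : F ⊆ closedBall 0 R) (hε : 0 < ε) (hRε : 9 * R ≤ ε) {e : E} (he : ‖e‖ = 1) :
    μH[(finrank ℝ E : ℝ) - 1] (distLevel F ε ∩ {x | ‖x‖ ≤ 2 * inner ℝ e x}) ≤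
      8 ^ ((finrank ℝ E : ℝ) - 1) * μH[(finrank ℝ E : ℝ) - 1] (ball (0 : (ℝ ∙ e)ᗮ) 1) *
        ENNReal.ofReal ε ^ ((finrank ℝ E : ℝ) - 1) := by
  rw [← cast_finrank_orthogonal_span_singleton (norm_ne_zero_iff.1 (he ▸ one_ne_zero))]
  set P := (ℝ ∙ e)ᗮ.orthogonalProjectionOnto
  have hball : P '' (distLevel F ε ∩ {x | ‖x‖ ≤ 2 * inner ℝ e x}) ⊆ closedBall 0 (2 * ε) := by
    rintro _ ⟨x, ⟨hx, -⟩, rfl⟩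
    rw [mem_closedBall_zero_iff]
    linarith [norm_orthogonalProjectionOnto_apply_le (ℝ ∙ e)ᗮ x,
      (abs_le.1 (abs_norm_sub_le hF hF_ne hR hx)).2]
  calc _ ≤ ((4 : ℝ≥0) : ℝ≥0∞) ^ (finrank ℝ (ℝ ∙ e)ᗮ : ℝ) * μH[finrank ℝ (ℝ ∙ e)ᗮ] _ :=
        hausdorffMeasure_le_mul_image_of_dist_le (f := P) (fun x hx y hy ↦ by
          rw [dist_eq_norm, dist_eq_norm]
          exact norm_sub_le_four_mul_norm_orthogonalProjection hF hF_ne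
            hR hε hRε he hx.1 hy.1 hx.2 hy.2) (Nat.cast_nonneg _)
    _ ≤ ((4 : ℝ≥0) : ℝ≥0∞) ^ (finrank ℝ (ℝ ∙ e)ᗮ : ℝ) *
          μH[finrank ℝ (ℝ ∙ e)ᗮ] (closedBall (0 : (ℝ ∙ e)ᗮ) (2 * ε)) := by gcongr
    _ = _ := by
        rw [Measure.addHaar_closedBall _ _ (by positivity)]
        simp only [ENNReal.rpow_natCast]
        rw [ENNReal.ofReal_pow (by positivity), ENNReal.ofReal_mul (by positivity), mul_pow,
          show (8 : ℝ≥0∞) = 4 * 2 by norm_num, mul_pow]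
        simp only [ENNReal.coe_ofNat, ENNReal.ofReal_ofNat]
        ring

theorem exists_hausdorffMeasure_le (hF : IsCompact F) (hF_ne : F.Nonempty) :
    ∃ b > 0, ∃ C : ℝ≥0∞, C ≠ ⊤ ∧ ∀ ε, b ≤ ε →
      μH[(finrank ℝ E : ℝ) - 1] (distLevel F ε) ≤
        C * ENNReal.ofReal ε ^ ((finrank ℝ E : ℝ) - 1) := by
  obtain ⟨R, hR_pos, hR⟩ := hF.isBounded.subset_closedBall_lt 0 0
  obtain ⟨I, hI_norm, hI⟩ := exists_finset_forall_exists_norm_le_two_mul_inner (E := E)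
  refine ⟨9 * R, by positivity, ∑ e ∈ I, 8 ^ ((finrank ℝ E : ℝ) - 1) *
    μH[(finrank ℝ E : ℝ) - 1] (ball (0 : (ℝ ∙ e)ᗮ) 1), ?_, fun ε hε ↦ ?_⟩
  · refine ENNReal.sum_ne_top.2 fun e he ↦ ENNReal.mul_ne_top ?_ ?_
    · exact ENNReal.rpow_ne_top_of_ne_zero (by norm_num) (by norm_num)
    · have he0 : e ≠ 0 := norm_ne_zero_iff.1 (hI_norm e he ▸ one_ne_zero)
      rw [← cast_finrank_orthogonal_span_singleton he0]
      exact isBounded_ball.measure_lt_top.ne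
  · have hcover : distLevel F ε ⊆ ⋃ e ∈ I, distLevel F ε ∩ {x | ‖x‖ ≤ 2 * inner ℝ e x} := by
      intro x hx
      have hx_pos : 0 < ‖x‖ := by linarith [(abs_le.1 (abs_norm_sub_le hF hF_ne hR hx)).1]
      obtain ⟨e, heI, he⟩ := hI x (norm_pos_iff.1 hx_pos)
      exact mem_iUnion₂.2 ⟨e, heI, hx, he⟩
    rw [Finset.sum_mul]
    exact (measure_mono hcover).trans <| (measure_biUnion_finset_le I _).trans <|
      Finset.sum_le_sum fun e he ↦
        hausdorffMeasure_inter_cone_le hF hF_ne hR (by linarith) hε (hI_norm e he)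

end distLevel

end LargeDistance

section SurfaceMeasures

theorem setIntegral_Ioc_inv_smul_eq_comp_exp_neg {G : Type*} [NormedAddCommGroup G]
    [NormedSpace ℝ G] (g : ℝ → G) {δ b : ℝ} (hδ : 0 < δ) (hb : 0 < b) :
    ∫ ε in Ioc δ b, ε⁻¹ • g ε = ∫ t in Ioc (-Real.log b) (Real.log δ⁻¹), g (Real.exp (-t)) := by
  have himage : (fun t ↦ Real.exp (-t)) '' Ico (-Real.log b) (Real.log δ⁻¹) = Ioc δ b := by
    ext ε
    refine ⟨?_, fun hε ↦ ⟨-Real.log ε, ?_, by simp only [neg_neg, Real.exp_log (hδ.trans hε.1)]⟩⟩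
    · rintro ⟨t, ht, rfl⟩
      rw [Real.log_inv] at ht
      exact ⟨(Real.log_lt_iff_lt_exp hδ).1 (lt_neg.1 ht.2),
        (Real.le_log_iff_exp_le hb).1 (neg_le.1 ht.1)⟩
    · rw [Real.log_inv]
      exact ⟨neg_le_neg (Real.log_le_log (hδ.trans hε.1) hε.2),
        neg_lt_neg (Real.log_lt_log hδ hε.1)⟩
  have hderiv (t : ℝ) : HasDerivAt (fun t ↦ Real.exp (-t)) (-Real.exp (-t)) t := by
    simpa using (hasDerivAt_neg t).exp
  have hinj : Function.Injective fun t ↦ Real.exp (-t) :=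
    Real.exp_injective.comp neg_injective
  rw [← himage, integral_image_eq_integral_abs_deriv_smul measurableSet_Ico
    (fun t _ ↦ (hderiv t).hasDerivWithinAt) hinj.injOn, integral_Ico_eq_integral_Ioc]
  simp_rw [abs_neg, Real.abs_exp, smul_inv_smul₀ (Real.exp_ne_zero _)]

open Module

/-- The rescaled surface measure `ε ^ (D - d + 1) • H^{d-1}|{dist(·, F) = ε}` at logarithmic time
`t = log (1 / ε)`, where `d` is the dimension of the space. -/
noncomputable def surfaceMeasure {E : Type*} [NormedAddCommGroup E] [NormedSpace ℝ E]
    [MeasurableSpace E] [BorelSpace E] (F : Set E) (D t : ℝ) : Measure E :=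
  ENNReal.ofReal (Real.exp (-t) ^ (D - finrank ℝ E + 1)) •
    μH[(finrank ℝ E : ℝ) - 1].restrict (distLevel F (Real.exp (-t)))

namespace surfaceMeasure

section NormedSpace

variable {E : Type*} [NormedAddCommGroup E] [NormedSpace ℝ E] [MeasurableSpace E] [BorelSpace E]
  {F : Set E} {D : ℝ}

theorem ae_mem_cthickening (hF : F.Nonempty) {b : ℝ} (hb : 0 < b) {t : ℝ} (ht : -Real.log b ≤ t) :
    ∀ᵐ x ∂surfaceMeasure F D t, x ∈ cthickening b F := by
  have hexp : Real.exp (-t) ≤ b := (Real.le_log_iff_exp_le hb).1 (neg_le.1 ht)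
  exact Measure.ae_smul_measure ((ae_restrict_mem distLevel.isClosed.measurableSet).mono
    fun _ hx ↦ distLevel.subset_cthickening hF hexp hx) _

variable [FiniteDimensional ℝ E]

theorem setIntegral_Ioc_frontier_cthickening_eq (hF : F.Nonempty) (f : E → ℝ) {δ b : ℝ}
    (hδ : 0 < δ) (hb : 0 < b) :
    ∫ ε in Ioc δ b, ε ^ (D - finrank ℝ E + 1) *
        (∫ x in frontier (cthickening ε F), f x ∂μH[(finrank ℝ E : ℝ) - 1]) * ε⁻¹ =
      ∫ t in Ioc (-Real.log b) (Real.log δ⁻¹), ∫ x, f x ∂surfaceMeasure F D t := by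
  have hsurface (t : ℝ) : ∫ x, f x ∂surfaceMeasure F D t = Real.exp (-t) ^ (D - finrank ℝ E + 1) *
      ∫ x in distLevel F (Real.exp (-t)), f x ∂μH[(finrank ℝ E : ℝ) - 1] := by
    rw [surfaceMeasure, integral_smul_measure, ENNReal.toReal_ofReal (by positivity), smul_eq_mul]
  simp_rw [hsurface]
  rw [← setIntegral_Ioc_inv_smul_eq_comp_exp_neg (fun ε ↦ ε ^ (D - finrank ℝ E + 1) *
    ∫ x in distLevel F ε, f x ∂μH[(finrank ℝ E : ℝ) - 1]) hδ hb]
  refine setIntegral_congr_ae measurableSet_Ioc ?_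
  filter_upwards [distLevel.ae_frontier_cthickening_eq hF] with ε hε hmem
  rw [hε (hδ.trans hmem.1), smul_eq_mul, mul_comm]

theorem measurable [Nontrivial E] (hF : IsCompact F) (hF_ne : F.Nonempty)
    [∀ t, IsFiniteMeasure (surfaceMeasure F D t)] : Measurable (surfaceMeasure F D) := by
  have hdim : (0 : ℝ) ≤ finrank ℝ E - 1 := sub_nonneg.2 (mod_cast finrank_pos)
  have := FiniteDimensional.proper_real E
  have hclosed (C : Set E) (hC : IsClosed C) : Measurable fun t ↦ surfaceMeasure F D t C := by
    have happly (t : ℝ) : surfaceMeasure F D t C =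
        ENNReal.ofReal (Real.exp (-t) ^ (D - finrank ℝ E + 1)) *
          μH[(finrank ℝ E : ℝ) - 1] (C ∩ distLevel F (Real.exp (-t))) := by
      rw [surfaceMeasure, Measure.smul_apply, Measure.restrict_apply hC.measurableSet, smul_eq_mul]
    simp_rw [happly]
    have hlevel := measurable_hausdorffMeasure_inter_preimage_singleton
      (distLevel.isClosedMap_infDist hF_ne hF.isBounded) hdim hC
    exact Measurable.mul (by fun_prop) <|
      hlevel.comp (by fun_prop : Measurable fun t ↦ Real.exp (-t))
  refine Measurable.measure_of_isPiSystem (S := {s | IsClosed s}) ?_ isPiSystem_isClosed hclosed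
    (hclosed univ isClosed_univ)
  rw [← borel_eq_generateFrom_isClosed]
  exact BorelSpace.measurable_eq

theorem le_sum_smul_map [Nontrivial E] [StrictConvexSpace ℝ E] {ι : Type*} [Fintype ι]
    {S : ι → E → E} {r : ι → ℝ≥0} (hS : IsSimilarityIFS S r) (hF : IsAttractor S F) (t : ℝ) :
    surfaceMeasure F D t ≤
      ∑ i, r i ^ D • (surfaceMeasure F D (t - -Real.log (r i))).map (S i) := by
  have hdim : (0 : ℝ) ≤ finrank ℝ E - 1 := sub_nonneg.2 (mod_cast finrank_pos)
  set c := ENNReal.ofReal (Real.exp (-t) ^ (D - finrank ℝ E + 1))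
  have hterm (i : ι) : r i ^ D • (surfaceMeasure F D (t - -Real.log (r i))).map (S i) =
      c • (r i ^ ((finrank ℝ E : ℝ) - 1) • (μH[(finrank ℝ E : ℝ) - 1].restrict
        (distLevel F (Real.exp (-t) / r i))).map (S i)) := by
    have hri : (0 : ℝ) < r i := hS.ratio_pos i
    have hexp : Real.exp (-(t - -Real.log (r i))) = Real.exp (-t) / r i := by
      rw [sub_neg_eq_add, neg_add', Real.exp_sub, Real.exp_log hri]
    have hscalar : (r i ^ D : ℝ≥0) *
        ENNReal.ofReal ((Real.exp (-t) / r i) ^ (D - finrank ℝ E + 1)) =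
        c * (r i ^ ((finrank ℝ E : ℝ) - 1) : ℝ≥0) := by
      rw [← ENNReal.ofReal_coe_nnreal, ← ENNReal.ofReal_coe_nnreal,
        ← ENNReal.ofReal_mul (by positivity), ← ENNReal.ofReal_mul (by positivity),
        NNReal.coe_rpow, NNReal.coe_rpow, Real.div_rpow (Real.exp_pos _).le hri.le,
        mul_div_left_comm, ← Real.rpow_sub hri]
      congr 3
      ring
    rw [surfaceMeasure, hexp, Measure.map_smul, ENNReal.smul_def, smul_smul, hscalar, mul_smul,
      ENNReal.smul_def]
  simp_rw [hterm, ← Finset.smul_sum]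
  rw [surfaceMeasure]
  gcongr
  exact restrict_hausdorffMeasure_le_sum_smul_map (fun i ↦ (hS.isSimilarity i).lipschitzWith) hdim
    (hS.distLevel_subset_iUnion_image hF _)

end NormedSpace

variable {ι E : Type*} [Fintype ι] [NormedAddCommGroup E] [InnerProductSpace ℝ E]
  [FiniteDimensional ℝ E] [MeasurableSpace E] [BorelSpace E] {S : ι → E → E} {r : ι → ℝ≥0}
  {F : Set E} {D : ℝ}

theorem exists_apply_univ_le_of_le (hF : IsCompact F) (hF_ne : F.Nonempty) :
    ∃ a : ℝ, ∃ C : ℝ≥0∞, C ≠ ⊤ ∧ ∀ t ≤ a,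
      surfaceMeasure F D t univ ≤ C * ENNReal.ofReal (Real.exp (-t)) ^ D := by
  obtain ⟨b, hb, C, hC, hle⟩ := distLevel.exists_hausdorffMeasure_le hF hF_ne
  refine ⟨-Real.log b, C, hC, fun t ht ↦ ?_⟩
  have hexp : 0 < ENNReal.ofReal (Real.exp (-t)) := ENNReal.ofReal_pos.2 (Real.exp_pos _)
  calc surfaceMeasure F D t univ = ENNReal.ofReal (Real.exp (-t)) ^ (D - finrank ℝ E + 1) *
        μH[(finrank ℝ E : ℝ) - 1] (distLevel F (Real.exp (-t))) := by
        rw [surfaceMeasure, Measure.smul_apply, Measure.restrict_apply_univ, smul_eq_mul,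
          ENNReal.ofReal_rpow_of_pos (Real.exp_pos _)]
    _ ≤ ENNReal.ofReal (Real.exp (-t)) ^ (D - finrank ℝ E + 1) *
        (C * ENNReal.ofReal (Real.exp (-t)) ^ ((finrank ℝ E : ℝ) - 1)) := by
        gcongr
        exact hle _ ((Real.log_le_iff_le_exp hb).1 (le_neg.1 ht))
    _ = C * ENNReal.ofReal (Real.exp (-t)) ^ D := by
        rw [mul_left_comm, ← ENNReal.rpow_add _ _ hexp.ne' ENNReal.ofReal_ne_top]
        congr 2
        ring

theorem exists_apply_univ_le [Nontrivial E] (hS : IsSimilarityIFS S r) (hF : IsAttractor S F)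
    (hD : 0 ≤ D) (hr : ∑ i, r i ^ D = 1) (a : ℝ) :
    ∃ M : ℝ≥0∞, M ≠ ⊤ ∧ ∀ t, a ≤ t → surfaceMeasure F D t univ ≤ M := by
  obtain ⟨p, hp_pos, hp_le, hp⟩ := hS.exists_pos_le_ratio
  obtain ⟨a₀, C, hC, hle⟩ := exists_apply_univ_le_of_le (D := D) hF.isCompact hF.nonempty
  set a₁ := min a a₀
  have hlog_nonneg : 0 ≤ -Real.log p := neg_nonneg.2 (Real.log_nonpos p.2 hp_le)
  refine ⟨C * ENNReal.ofReal (Real.exp (-(a₁ - -Real.log p))) ^ D,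
    ENNReal.mul_ne_top hC (ENNReal.rpow_ne_top_of_nonneg hD ENNReal.ofReal_ne_top), fun t ht ↦ ?_⟩
  refine le_of_forall_le_sum_mul_comp_sub (w := fun i ↦ (r i ^ D : ℝ≥0)) (a := a₁)
    (g := fun t ↦ surfaceMeasure F D t univ) (mod_cast hr)
    (fun i ↦ neg_pos.2 (Real.log_neg (hS.ratio_pos i) (hS.ratio_lt_one i)))
    (fun i ↦ neg_le_neg (Real.log_le_log hp_pos (hp i))) (fun t ↦ ?_) (fun t ht ↦ ?_) ?_
  · refine (le_sum_smul_map hS hF t univ).trans_eq ?_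
    simp only [Measure.coe_finsetSum, Finset.sum_apply, Measure.smul_apply,
      Measure.map_apply (hS.measurable _) MeasurableSet.univ, preimage_univ, ENNReal.smul_def,
      smul_eq_mul]
    rfl
  · refine (hle t (ht.2.trans (min_le_right _ _))).trans ?_
    gcongr
    exact ht.1
  · exact (sub_le_self _ hlog_nonneg).trans ((min_le_left _ _).trans ht)

end surfaceMeasure

end SurfaceMeasures

section MainTheorem

open Module
open scoped BoundedContinuousFunction

variable {ι E : Type*} [Fintype ι] [NormedAddCommGroup E] [InnerProductSpace ℝ E]
  [FiniteDimensional ℝ E] [Nontrivial E] [MeasurableSpace E] [BorelSpace E]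
  {S : ι → E → E} {r : ι → ℝ≥0} {F : Set E} {D : ℝ}

theorem surfaceMeasure.exists_forall_tendsto_inv_mul_integral (hS : IsSimilarityIFS S r)
    (hF : IsAttractor S F) (hD : 0 ≤ D) (hr : ∑ i, r i ^ D = 1) (hF_pos : μH[D] F ≠ 0) {b : ℝ}
    (hb : 0 < b) :
    ∃ Λ : ℝ, ∀ f : E →ᵇ ℝ,
      Tendsto (fun T ↦ T⁻¹ * ∫ t in Ioc (-Real.log b) T, ∫ x, f x ∂surfaceMeasure F D t) atTop
        (𝓝 (Λ * ∫ x, f x ∂((μH[D] F)⁻¹ • μH[D].restrict F))) := by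
  have hmass (a : ℝ) := exists_apply_univ_le (D := D) hS hF hD hr a
  have hfinite (t : ℝ) : IsFiniteMeasure (surfaceMeasure F D t) := by
    obtain ⟨M, hM, hle⟩ := hmass t
    exact ⟨(hle t le_rfl).trans_lt hM.lt_top⟩
  let ν : ProbabilityTheory.Kernel ℝ E :=
    ⟨surfaceMeasure F D, surfaceMeasure.measurable hF.isCompact hF.nonempty⟩
  have hoccupation (a b : ℝ) : IsFiniteMeasure (occupation ν a b) := by
    obtain ⟨M, hM, hle⟩ := hmass a
    exact occupation.isFiniteMeasure_of_le hM hle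
  have hprob : IsProbabilityMeasure ((μH[D] F)⁻¹ • μH[D].restrict F) := ⟨by
    rw [Measure.smul_apply, Measure.restrict_apply_univ, smul_eq_mul,
      ENNReal.inv_mul_cancel hF_pos (hS.hausdorffMeasure_lt_top hF hD hr).ne]⟩
  obtain ⟨q, hq_lt, hq⟩ := hS.exists_ratio_le_lt_one
  have hSq (i : ι) : LipschitzWith q (S i) := (hS.isSimilarity i).lipschitzWith.weaken (hq i)
  refine exists_forall_tendsto_inv_mul_integral_occupation (ν := ν) (s := fun i ↦ -Real.log (r i))
    (K := cthickening b F) (w := fun i ↦ r i ^ D) hSq hq_lt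
    (fun i ↦ NNReal.rpow_pos (hS.ratio_pos i)) hr
    (fun i ↦ neg_pos.2 (Real.log_neg (hS.ratio_pos i) (hS.ratio_lt_one i))) hF.isCompact.cthickening
    (fun i ↦ mapsTo_cthickening_of_lipschitzWith_one ((hSq i).weaken hq_lt.le) (hF.mapsTo i) b)
    (hS.hutchinson_smul_restrict_hausdorffMeasure hF hD hr _) ?_
    (surfaceMeasure.le_sum_smul_map hS hF)
    (fun t ht ↦ surfaceMeasure.ae_mem_cthickening hF.nonempty hb ht)
  exact Measure.ae_smul_measure ((ae_restrict_mem hF.isCompact.measurableSet).mono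
    fun _ hx ↦ self_subset_cthickening F hx) _

theorem statement6_general (hS : IsSimilarityIFS S r) (hF : IsAttractor S F) (hD : 0 ≤ D)
    (hr : ∑ i, r i ^ D = 1) (hF_pos : μH[D] F ≠ 0) {ε₀ : ℝ} (hε₀ : 0 < ε₀) :
    ∃ Λ : ℝ,
      Tendsto (fun δ : ℝ ↦ (Real.log δ⁻¹)⁻¹ * ∫ ε in Ioc δ ε₀, ε ^ (D - finrank ℝ E + 1) *
        (μH[(finrank ℝ E : ℝ) - 1] (frontier (cthickening ε F))).toReal * ε⁻¹) (𝓝[>] 0) (𝓝 Λ) ∧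
      ∀ f : E →ᵇ ℝ, Tendsto (fun δ : ℝ ↦ (Real.log δ⁻¹)⁻¹ * ∫ ε in Ioc δ ε₀,
        ε ^ (D - finrank ℝ E + 1) *
          (∫ x in frontier (cthickening ε F), f x ∂μH[(finrank ℝ E : ℝ) - 1]) * ε⁻¹) (𝓝[>] 0)
        (𝓝 (Λ * ∫ x, f x ∂((μH[D] F)⁻¹ • μH[D].restrict F))) := by
  obtain ⟨Λ, hΛ⟩ :=
    surfaceMeasure.exists_forall_tendsto_inv_mul_integral hS hF hD hr hF_pos hε₀
  have hlim (f : E →ᵇ ℝ) : Tendsto (fun δ : ℝ ↦ (Real.log δ⁻¹)⁻¹ * ∫ ε in Ioc δ ε₀,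
      ε ^ (D - finrank ℝ E + 1) *
        (∫ x in frontier (cthickening ε F), f x ∂μH[(finrank ℝ E : ℝ) - 1]) * ε⁻¹) (𝓝[>] 0)
      (𝓝 (Λ * ∫ x, f x ∂((μH[D] F)⁻¹ • μH[D].restrict F))) := by
    refine ((hΛ f).comp (Real.tendsto_log_atTop.comp tendsto_inv_nhdsGT_zero)).congr' ?_
    filter_upwards [self_mem_nhdsWithin] with δ hδ
    rw [surfaceMeasure.setIntegral_Ioc_frontier_cthickening_eq hF.nonempty f hδ hε₀]
    rfl
  have htotal : ((μH[D] F)⁻¹ * μH[D] F).toReal = 1 := by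
    rw [ENNReal.inv_mul_cancel hF_pos (hS.hausdorffMeasure_lt_top hF hD hr).ne, ENNReal.toReal_one]
  refine ⟨Λ, ?_, hlim⟩
  simpa [Measure.real, ENNReal.toReal_mul, htotal] using hlim 1

end MainTheorem

/-- (Localization of the average surface content.) Under the SOSC
with respect to `J` and for any `ε₀ > 0`, the logarithmically averaged surface
content `Λ_S = lim_{δ→0⁺} (1/ln(1/δ)) ∫_δ^{ε₀} ε^{D-d+1} H^{d-1}(∂F(ε)) ε⁻¹ dε`
exists and is finite, and for every bounded continuous `f : ℝ^d → ℝ` the logarithmic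
averages of `ε^{D-d+1} ∫_{∂F(ε)} f dH^{d-1}` converge to `Λ_S · ∫_F f dμ_F`; i.e. the
rescaled surface measures converge weakly to `Λ_S · μ_F` with
`μ_F = H^D(F ∩ ·)/H^D(F)`. -/
theorem statement6 (d N : ℕ) (hd : 1 ≤ d) (hN : 2 ≤ N)
    (S : Fin N → EuclideanSpace ℝ (Fin d) → EuclideanSpace ℝ (Fin d))
    (r : Fin N → ℝ) (hr : ∀ i, r i ∈ Set.Ioo (0 : ℝ) 1)
    (hS : ∀ i x y, dist (S i x) (S i y) = r i * dist x y)
    (F : Set (EuclideanSpace ℝ (Fin d)))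
    (hF_ne : F.Nonempty) (hF_cpt : IsCompact F)
    (hF_self : F = ⋃ i, S i '' F)
    (D : ℝ) (hD : 0 < D) (hD_dim : ∑ i, r i ^ D = 1)
    (J : Set (EuclideanSpace ℝ (Fin d))) (hJ_cpt : IsCompact J)
    (hJ_reg : J = closure (interior J))
    (hJ_sub : ∀ i, S i '' J ⊆ J)
    (hJ_disj : ∀ i j, i ≠ j → Disjoint (S i '' interior J) (S j '' interior J))
    (hSOSC : (F ∩ interior J).Nonempty)
    (ε₀ : ℝ) (hε₀ : 0 < ε₀) :
    ∃ Λ : ℝ,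
      Tendsto (fun δ : ℝ => (Real.log δ⁻¹)⁻¹ *
          ∫ ε in Set.Ioc δ ε₀,
            ε ^ (D - d + 1) * (μH[(d:ℝ) - 1] (frontier (Metric.cthickening ε F))).toReal * ε⁻¹)
        (𝓝[>] 0) (𝓝 Λ)
      ∧ ∀ f : EuclideanSpace ℝ (Fin d) → ℝ, Continuous f →
          (∃ C : ℝ, ∀ x, |f x| ≤ C) →
          Tendsto (fun δ : ℝ => (Real.log δ⁻¹)⁻¹ *
              ∫ ε in Set.Ioc δ ε₀,
                ε ^ (D - d + 1) * (∫ x in frontier (Metric.cthickening ε F), f x ∂(μH[(d:ℝ) - 1])) * ε⁻¹)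
            (𝓝[>] 0)
            (𝓝 (Λ * ∫ x, f x
              ∂((μH[D] F)⁻¹ •
                (μH[D] : Measure (EuclideanSpace ℝ (Fin d))).restrict F))) := by
  lift r to Fin N → ℝ≥0 using fun i ↦ (hr i).1.le
  have : Nonempty (Fin d) := ⟨⟨0, hd⟩⟩
  have hIFS : IsSimilarityIFS S r := ⟨fun i ↦ (hr i).1, fun i ↦ (hr i).2, hS⟩
  have hF : IsAttractor S F := ⟨hF_ne, hF_cpt, hF_self⟩
  have hr_sum : ∑ i, r i ^ D = 1 := NNReal.coe_injective (by push_cast; exact hD_dim)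
  have hOSC : OpenSetCondition S (interior J) := openSetCondition_interior
    (fun i ↦ (hIFS.isSimilarity i).isOpenMap (hIFS.ratio_pos i)) hJ_cpt.isBounded
    (hSOSC.mono inter_subset_right) hJ_sub hJ_disj
  obtain ⟨Λ, hΛ, hlim⟩ := statement6_general hIFS hF hD.le hr_sum
    (hIFS.hausdorffMeasure_ne_zero hF hOSC hD hr_sum) hε₀
  rw [finrank_euclideanSpace_fin] at hΛ hlim
  exact ⟨Λ, hΛ, fun f hf ⟨C, hC⟩ ↦
    hlim (BoundedContinuousFunction.ofNormedAddCommGroup f hf C hC)⟩
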